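/- arXiv:1404.3949 — 11 statements merged into one kernel-verified Lean document; each statement's English description precedes it below -/
import Mathlib

section
/- Let k ≥ 2 be an even integer and set n = (k^4 + 2k^3 + 6k^2 + 4k)/2. Let g₁ = 1, g₂ = (k^3 + 2k^2 + 6k + 2)/2, g₃ = (k^4 + 4k^2 - 8k)/4, g₄ = (k^4 + 4k^2 - 4k)/4, viewed as elements of ℤ/nℤ. Then for every x ∈ ℤ/nℤ there exist integers c₁, c₂, c₃, c₄ with |c₁| + |c₂| + |c₃| + |c₄| ≤ k and x = c₁·g₁ + c₂·g₂ + c₃·g₃ + c₄·g₄. (Equivalently, the undirected circulant graph on ℤ/nℤ with connection set {±g₁, ±g₂, ±g₃, ±g₄} has diameter at most k.) -/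
/-
Proof outline.  Put k = 2a.  Among all ways of writing a residue as an integer combination of
the generators, choose one whose coefficient vector has least taxicab length.  Subtracting any
relation from it cannot shorten it.  Relations are close to multiples of a: four of them lie near
twice a coordinate axis, eight more sit near corners of a cube, and one is a sum of two axes.
For every sign pattern of the coefficients, a dozen of the resulting inequalities already force
the length to be at most 2a, provided a is at least two; this is piecewise linear arithmetic.
Smallest modulus, thirty-two, gets handled by listing explicit witnesses instead.
-/

/-- The lattice of integer relations between the four generators (with `k = 2 * a`). -/
def RelLat (a v₁ v₂ v₃ v₄ : ℤ) : Prop :=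
  (8 * a ^ 4 + 8 * a ^ 3 + 12 * a ^ 2 + 4 * a) ∣
    v₁ + v₂ * (4 * a ^ 3 + 4 * a ^ 2 + 6 * a + 1) + v₃ * (4 * a ^ 4 + 4 * a ^ 2 - 4 * a)
      + v₄ * (4 * a ^ 4 + 4 * a ^ 2 - 2 * a)

theorem RelLat.neg {a v₁ v₂ v₃ v₄ : ℤ} (h : RelLat a v₁ v₂ v₃ v₄) : RelLat a (-v₁) (-v₂) (-v₃) (-v₄) := by
  obtain ⟨c, hc⟩ := h
  exact ⟨-c, by linear_combination -hc⟩

theorem lat1 (a : ℤ) : RelLat a (a) (a) (a) (a + 1) :=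
  ⟨1 * a + 0, by ring⟩

theorem lat2 (a : ℤ) : RelLat a (2 * a) 0 1 (-1) :=
  ⟨0, by ring⟩

theorem lat3 (a : ℤ) : RelLat a 0 (2 * a) (-1) 1 :=
  ⟨1, by ring⟩

theorem lat4 (a : ℤ) : RelLat a 1 (-1) (-2 * a - 1) (-1) :=
  ⟨-1 * a + 0, by ring⟩

theorem lat5 (a : ℤ) : RelLat a 1 (-1) (-1) (2 * a + 1) :=
  ⟨1 * a + -1, by ring⟩

theorem lat6 (a : ℤ) : RelLat a (a - 1) (a + 1) (a + 1) (-a) :=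
  ⟨1, by ring⟩

theorem lat7 (a : ℤ) : RelLat a (a) (-a) (a + 1) (a) :=
  ⟨1 * a + -1, by ring⟩

theorem lat8 (a : ℤ) : RelLat a (a + 1) (a - 1) (-a - 1) (a) :=
  ⟨0, by ring⟩

theorem lat9 (a : ℤ) : RelLat a (2 * a) (2 * a) 0 0 :=
  ⟨1, by ring⟩

theorem lat10 (a : ℤ) : RelLat a (a) (-a) (-a + 1) (-a - 2) :=
  ⟨-1 * a + 0, by ring⟩

theorem lat11 (a : ℤ) : RelLat a (a - 1) (-a + 1) (a + 2) (-a - 1) :=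
  ⟨0, by ring⟩

theorem lat12 (a : ℤ) : RelLat a (a) (a) (-a) (-a - 1) :=
  ⟨-1 * a + 1, by ring⟩

theorem lat13 (a : ℤ) : RelLat a (a + 1) (-a - 1) (-a) (a - 1) :=
  ⟨-1, by ring⟩

/-! Orthant estimates: here `p q r s` denote absolute values of the four coefficients, while each
hypothesis expresses that removing one particular relation brings no gain. -/

theorem orth0 (a p q r s : ℤ) (ha : 2 ≤ a) (hp : 0 ≤ p) (hq : 0 ≤ q) (hr : 0 ≤ r) (hs : 0 ≤ s)
    (h1 : p + q + r + s ≤ |p - a| + |q - a| + |r - a| + |s - (a + 1)|)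
    (h2 : p + q + r + s ≤ |p - 2*a| + q + |r - 1| + (s + 1))
    (h3 : p + q + r + s ≤ p + |q - 2*a| + (r + 1) + |s - 1|)
    (h4 : p + q + r + s ≤ (p + 1) + |q - 1| + |r - (2*a + 1)| + |s - 1|)
    (h5 : p + q + r + s ≤ |p - 1| + (q + 1) + (r + 1) + |s - (2*a + 1)|)
    (h6 : p + q + r + s ≤ |p - (a - 1)| + |q - (a + 1)| + |r - (a + 1)| + (s + a))
    (h7 : p + q + r + s ≤ |p - a| + (q + a) + |r - (a + 1)| + |s - a|)
    (h8 : p + q + r + s ≤ |p - (a + 1)| + |q - (a - 1)| + (r + a + 1) + |s - a|)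
    (h9 : p + q + r + s ≤ |p - 2*a| + |q - 2*a| + r + s)
    (h10 : p + q + r + s ≤ (p + a) + |q - a| + |r - (a - 1)| + |s - (a + 2)|)
    (h11 : p + q + r + s ≤ |p - (a - 1)| + (q + a - 1) + |r - (a + 2)| + (s + a + 1)) :
    p + q + r + s ≤ 2 * a := by
  grind

theorem orth1 (a p q r s : ℤ) (ha : 2 ≤ a) (hp : 0 ≤ p) (hq : 0 ≤ q) (hr : 0 ≤ r) (hs : 0 ≤ s)
    (h1 : p + q + r + s ≤ |p - (a - 1)| + |q - (a + 1)| + |r - (a + 1)| + |s - a|)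
    (h2 : p + q + r + s ≤ |p - 2*a| + q + |r - 1| + |s - 1|)
    (h3 : p + q + r + s ≤ (p + 1) + |q - 1| + |r - 1| + |s - (2*a + 1)|)
    (h4 : p + q + r + s ≤ p + |q - 2*a| + (r + 1) + (s + 1))
    (h5 : p + q + r + s ≤ (p + 1) + |q - 1| + |r - (2*a + 1)| + (s + 1))
    (h6 : p + q + r + s ≤ |p - a| + |q - a| + (r + a) + |s - (a + 1)|)
    (h7 : p + q + r + s ≤ |p - (a - 1)| + (q + a - 1) + |r - (a + 2)| + |s - (a + 1)|)
    (h8 : p + q + r + s ≤ |p - a| + |q - a| + |r - a| + (s + a + 1))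
    (h9 : p + q + r + s ≤ |p - 2*a| + |q - 2*a| + r + s)
    (h10 : p + q + r + s ≤ |p - a| + (q + a) + (r + a - 1) + |s - (a + 2)|)
    (h11 : p + q + r + s ≤ |p - a| + (q + a) + |r - (a + 1)| + (s + a)) :
    p + q + r + s ≤ 2 * a := by
  grind

theorem orth2 (a p q r s : ℤ) (ha : 2 ≤ a) (hp : 0 ≤ p) (hq : 0 ≤ q) (hr : 0 ≤ r) (hs : 0 ≤ s)
    (h1 : p + q + r + s ≤ |p - (a + 1)| + |q - (a - 1)| + |r - (a + 1)| + |s - a|)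
    (h2 : p + q + r + s ≤ p + |q - 2*a| + |r - 1| + |s - 1|)
    (h3 : p + q + r + s ≤ |p - 1| + (q + 1) + |r - 1| + |s - (2*a + 1)|)
    (h4 : p + q + r + s ≤ |p - 2*a| + q + (r + 1) + (s + 1))
    (h5 : p + q + r + s ≤ |p - 1| + (q + 1) + |r - (2*a + 1)| + (s + 1))
    (h6 : p + q + r + s ≤ |p - a| + |q - a| + (r + a) + |s - (a + 1)|)
    (h7 : p + q + r + s ≤ (p + a - 1) + |q - (a - 1)| + |r - (a + 2)| + |s - (a + 1)|)
    (h8 : p + q + r + s ≤ |p - a| + |q - a| + |r - a| + (s + a + 1))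
    (h9 : p + q + r + s ≤ |p - 2*a| + |q - 2*a| + r + s)
    (h10 : p + q + r + s ≤ (p + a) + |q - a| + (r + a - 1) + |s - (a + 2)|)
    (h11 : p + q + r + s ≤ (p + a) + |q - a| + |r - (a + 1)| + (s + a)) :
    p + q + r + s ≤ 2 * a := by
  grind

theorem orth3 (a p q r s : ℤ) (ha : 2 ≤ a) (hp : 0 ≤ p) (hq : 0 ≤ q) (hr : 0 ≤ r) (hs : 0 ≤ s)
    (h1 : p + q + r + s ≤ |p - a| + |q - a| + |r - a| + |s - (a + 1)|)
    (h2 : p + q + r + s ≤ p + |q - 2*a| + |r - 1| + (s + 1))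
    (h3 : p + q + r + s ≤ |p - 2*a| + q + (r + 1) + |s - 1|)
    (h4 : p + q + r + s ≤ |p - 1| + (q + 1) + |r - (2*a + 1)| + |s - 1|)
    (h5 : p + q + r + s ≤ (p + 1) + |q - 1| + (r + 1) + |s - (2*a + 1)|)
    (h6 : p + q + r + s ≤ |p - (a + 1)| + |q - (a - 1)| + |r - (a + 1)| + (s + a))
    (h7 : p + q + r + s ≤ (p + a) + |q - a| + |r - (a + 1)| + |s - a|)
    (h8 : p + q + r + s ≤ |p - (a - 1)| + |q - (a + 1)| + (r + a + 1) + |s - a|)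
    (h9 : p + q + r + s ≤ |p - a| + (q + a) + |r - (a - 1)| + |s - (a + 2)|)
    (h10 : p + q + r + s ≤ |p - 2*a| + |q - 2*a| + r + s)
    (h11 : p + q + r + s ≤ (p + a - 1) + |q - (a - 1)| + |r - (a + 2)| + (s + a + 1)) :
    p + q + r + s ≤ 2 * a := by
  grind

theorem orth4 (a p q r s : ℤ) (ha : 2 ≤ a) (hp : 0 ≤ p) (hq : 0 ≤ q) (hr : 0 ≤ r) (hs : 0 ≤ s)
    (h1 : p + q + r + s ≤ |p - a| + |q - a| + |r - (a + 1)| + |s - a|)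
    (h2 : p + q + r + s ≤ |p - 2*a| + q + |r - 1| + (s + 1))
    (h3 : p + q + r + s ≤ p + |q - 2*a| + |r - 1| + (s + 1))
    (h4 : p + q + r + s ≤ |p - 1| + |q - 1| + (r + 1) + |s - (2*a + 1)|)
    (h5 : p + q + r + s ≤ (p + 1) + (q + 1) + |r - (2*a + 1)| + |s - 1|)
    (h6 : p + q + r + s ≤ |p - (a + 1)| + |q - (a + 1)| + (r + a) + |s - (a - 1)|)
    (h7 : p + q + r + s ≤ |p - a| + (q + a) + |r - a| + |s - (a + 1)|)
    (h8 : p + q + r + s ≤ (p + a) + |q - a| + |r - a| + |s - (a + 1)|)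
    (h9 : p + q + r + s ≤ |p - (a - 1)| + |q - (a - 1)| + |r - (a + 2)| + (s + a + 1))
    (h10 : p + q + r + s ≤ |p - (a + 1)| + (q + a - 1) + (r + a + 1) + |s - a|)
    (h11 : p + q + r + s ≤ (p + a - 1) + |q - (a + 1)| + (r + a + 1) + |s - a|)
    (h12 : p + q + r + s ≤ (p + a) + (q + a) + |r - (a - 1)| + |s - (a + 2)|) :
    p + q + r + s ≤ 2 * a := by
  grind

theorem orth5 (a p q r s : ℤ) (ha : 2 ≤ a) (hp : 0 ≤ p) (hq : 0 ≤ q) (hr : 0 ≤ r) (hs : 0 ≤ s)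
    (h1 : p + q + r + s ≤ |p - (a - 1)| + |q - (a - 1)| + |r - (a + 2)| + |s - (a + 1)|)
    (h2 : p + q + r + s ≤ |p - 2*a| + q + |r - 1| + |s - 1|)
    (h3 : p + q + r + s ≤ p + |q - 2*a| + |r - 1| + |s - 1|)
    (h4 : p + q + r + s ≤ (p + 1) + (q + 1) + |r - 1| + |s - (2*a + 1)|)
    (h5 : p + q + r + s ≤ (p + 1) + (q + 1) + |r - (2*a + 1)| + (s + 1))
    (h6 : p + q + r + s ≤ |p - a| + |q - a| + (r + a - 1) + |s - (a + 2)|)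
    (h7 : p + q + r + s ≤ |p - a| + |q - a| + |r - (a + 1)| + (s + a))
    (h8 : p + q + r + s ≤ |p - (a + 1)| + |q - (a + 1)| + (r + a) + (s + a - 1)) :
    p + q + r + s ≤ 2 * a := by
  grind

theorem orth6 (a p q r s : ℤ) (ha : 2 ≤ a) (hp : 0 ≤ p) (hq : 0 ≤ q) (hr : 0 ≤ r) (hs : 0 ≤ s)
    (h1 : p + q + r + s ≤ |p - (a + 1)| + |q - (a + 1)| + |r - a| + |s - (a - 1)|)
    (h2 : p + q + r + s ≤ |p - 1| + |q - 1| + |r - 1| + |s - (2*a + 1)|)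
    (h3 : p + q + r + s ≤ |p - 1| + |q - 1| + |r - (2*a + 1)| + (s + 1))
    (h4 : p + q + r + s ≤ |p - 2*a| + q + (r + 1) + (s + 1))
    (h5 : p + q + r + s ≤ p + |q - 2*a| + (r + 1) + (s + 1))
    (h6 : p + q + r + s ≤ |p - (a + 1)| + (q + a - 1) + |r - (a + 1)| + |s - a|)
    (h7 : p + q + r + s ≤ (p + a - 1) + |q - (a + 1)| + |r - (a + 1)| + |s - a|)
    (h8 : p + q + r + s ≤ |p - a| + |q - a| + (r + a + 1) + |s - a|)
    (h9 : p + q + r + s ≤ (p + a - 1) + (q + a - 1) + |r - (a + 2)| + |s - (a + 1)|)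
    (h10 : p + q + r + s ≤ |p - a| + (q + a) + (r + a) + |s - (a + 1)|)
    (h11 : p + q + r + s ≤ (p + a) + |q - a| + (r + a) + |s - (a + 1)|) :
    p + q + r + s ≤ 2 * a := by
  grind

theorem orth7 (a p q r s : ℤ) (ha : 2 ≤ a) (hp : 0 ≤ p) (hq : 0 ≤ q) (hr : 0 ≤ r) (hs : 0 ≤ s)
    (h1 : p + q + r + s ≤ |p - a| + |q - a| + |r - (a - 1)| + |s - (a + 2)|)
    (h2 : p + q + r + s ≤ |p - 1| + |q - 1| + |r - (2*a + 1)| + |s - 1|)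
    (h3 : p + q + r + s ≤ |p - 2*a| + q + (r + 1) + |s - 1|)
    (h4 : p + q + r + s ≤ p + |q - 2*a| + (r + 1) + |s - 1|)
    (h5 : p + q + r + s ≤ (p + 1) + (q + 1) + (r + 1) + |s - (2*a + 1)|)
    (h6 : p + q + r + s ≤ |p - (a + 1)| + |q - (a + 1)| + |r - a| + (s + a - 1))
    (h7 : p + q + r + s ≤ |p - a| + (q + a) + |r - a| + |s - (a + 1)|)
    (h8 : p + q + r + s ≤ (p + a) + |q - a| + |r - a| + |s - (a + 1)|)
    (h9 : p + q + r + s ≤ |p - (a + 1)| + (q + a - 1) + |r - (a + 1)| + (s + a))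
    (h10 : p + q + r + s ≤ (p + a - 1) + |q - (a + 1)| + |r - (a + 1)| + (s + a))
    (h11 : p + q + r + s ≤ (p + a) + (q + a) + |r - (a + 1)| + |s - a|) :
    p + q + r + s ≤ 2 * a := by
  grind

/-- Shortest vectors with nonnegative first entry: split into eight orthants and quote the matching
estimate above. -/
theorem coreP (a x₁ x₂ x₃ x₄ : ℤ) (ha : 2 ≤ a) (h₁ : 0 ≤ x₁)
    (hmin : ∀ v₁ v₂ v₃ v₄, RelLat a v₁ v₂ v₃ v₄ →
      |x₁| + |x₂| + |x₃| + |x₄| ≤ |x₁ - v₁| + |x₂ - v₂| + |x₃ - v₃| + |x₄ - v₄|) :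
    |x₁| + |x₂| + |x₃| + |x₄| ≤ 2 * a := by
  have e₁ : |x₁| = x₁ := abs_of_nonneg h₁
  rcases le_total 0 x₂ with h₂ | h₂ <;> rcases le_total 0 x₃ with h₃ | h₃ <;>
    rcases le_total 0 x₄ with h₄ | h₄
  · have e₂ : |x₂| = x₂ := abs_of_nonneg h₂
    have e₃ : |x₃| = x₃ := abs_of_nonneg h₃
    have e₄ : |x₄| = x₄ := abs_of_nonneg h₄
    rw [e₁, e₂, e₃, e₄] at hmin ⊢
    apply orth0 a x₁ x₂ x₃ x₄ ha h₁ h₂ h₃ h₄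
    · grind [hmin _ _ _ _ (lat1 a)]
    · grind [hmin _ _ _ _ (lat2 a)]
    · grind [hmin _ _ _ _ (lat3 a)]
    · grind [hmin _ _ _ _ (lat4 a).neg]
    · grind [hmin _ _ _ _ (lat5 a)]
    · grind [hmin _ _ _ _ (lat6 a)]
    · grind [hmin _ _ _ _ (lat7 a)]
    · grind [hmin _ _ _ _ (lat8 a)]
    · grind [hmin _ _ _ _ (lat9 a)]
    · grind [hmin _ _ _ _ (lat10 a).neg]
    · grind [hmin _ _ _ _ (lat11 a)]
  · have e₂ : |x₂| = x₂ := abs_of_nonneg h₂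
    have e₃ : |x₃| = x₃ := abs_of_nonneg h₃
    have e₄ : |x₄| = -x₄ := abs_of_nonpos h₄
    rw [e₁, e₂, e₃, e₄] at hmin ⊢
    apply orth1 a x₁ x₂ x₃ (-x₄) ha h₁ h₂ h₃ (neg_nonneg.mpr h₄)
    · grind [hmin _ _ _ _ (lat6 a)]
    · grind [hmin _ _ _ _ (lat2 a)]
    · grind [hmin _ _ _ _ (lat5 a).neg]
    · grind [hmin _ _ _ _ (lat3 a)]
    · grind [hmin _ _ _ _ (lat4 a).neg]
    · grind [hmin _ _ _ _ (lat12 a)]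
    · grind [hmin _ _ _ _ (lat11 a)]
    · grind [hmin _ _ _ _ (lat1 a)]
    · grind [hmin _ _ _ _ (lat9 a)]
    · grind [hmin _ _ _ _ (lat10 a)]
    · grind [hmin _ _ _ _ (lat7 a)]
  · have e₂ : |x₂| = x₂ := abs_of_nonneg h₂
    have e₃ : |x₃| = -x₃ := abs_of_nonpos h₃
    have e₄ : |x₄| = x₄ := abs_of_nonneg h₄
    rw [e₁, e₂, e₃, e₄] at hmin ⊢
    apply orth2 a x₁ x₂ (-x₃) x₄ ha h₁ h₂ (neg_nonneg.mpr h₃) h₄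
    · grind [hmin _ _ _ _ (lat8 a)]
    · grind [hmin _ _ _ _ (lat3 a)]
    · grind [hmin _ _ _ _ (lat5 a)]
    · grind [hmin _ _ _ _ (lat2 a)]
    · grind [hmin _ _ _ _ (lat4 a)]
    · grind [hmin _ _ _ _ (lat1 a)]
    · grind [hmin _ _ _ _ (lat11 a).neg]
    · grind [hmin _ _ _ _ (lat12 a)]
    · grind [hmin _ _ _ _ (lat9 a)]
    · grind [hmin _ _ _ _ (lat10 a).neg]
    · grind [hmin _ _ _ _ (lat7 a).neg]
  · have e₂ : |x₂| = x₂ := abs_of_nonneg h₂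
    have e₃ : |x₃| = -x₃ := abs_of_nonpos h₃
    have e₄ : |x₄| = -x₄ := abs_of_nonpos h₄
    rw [e₁, e₂, e₃, e₄] at hmin ⊢
    apply orth3 a x₁ x₂ (-x₃) (-x₄) ha h₁ h₂ (neg_nonneg.mpr h₃) (neg_nonneg.mpr h₄)
    · grind [hmin _ _ _ _ (lat12 a)]
    · grind [hmin _ _ _ _ (lat3 a)]
    · grind [hmin _ _ _ _ (lat2 a)]
    · grind [hmin _ _ _ _ (lat4 a)]
    · grind [hmin _ _ _ _ (lat5 a).neg]
    · grind [hmin _ _ _ _ (lat8 a)]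
    · grind [hmin _ _ _ _ (lat7 a).neg]
    · grind [hmin _ _ _ _ (lat6 a)]
    · grind [hmin _ _ _ _ (lat10 a)]
    · grind [hmin _ _ _ _ (lat9 a)]
    · grind [hmin _ _ _ _ (lat11 a).neg]
  · have e₂ : |x₂| = -x₂ := abs_of_nonpos h₂
    have e₃ : |x₃| = x₃ := abs_of_nonneg h₃
    have e₄ : |x₄| = x₄ := abs_of_nonneg h₄
    rw [e₁, e₂, e₃, e₄] at hmin ⊢
    apply orth4 a x₁ (-x₂) x₃ x₄ ha h₁ (neg_nonneg.mpr h₂) h₃ h₄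
    · grind [hmin _ _ _ _ (lat7 a)]
    · grind [hmin _ _ _ _ (lat2 a)]
    · grind [hmin _ _ _ _ (lat3 a).neg]
    · grind [hmin _ _ _ _ (lat5 a)]
    · grind [hmin _ _ _ _ (lat4 a).neg]
    · grind [hmin _ _ _ _ (lat13 a)]
    · grind [hmin _ _ _ _ (lat1 a)]
    · grind [hmin _ _ _ _ (lat12 a).neg]
    · grind [hmin _ _ _ _ (lat11 a)]
    · grind [hmin _ _ _ _ (lat8 a)]
    · grind [hmin _ _ _ _ (lat6 a).neg]
    · grind [hmin _ _ _ _ (lat10 a).neg]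
  · have e₂ : |x₂| = -x₂ := abs_of_nonpos h₂
    have e₃ : |x₃| = x₃ := abs_of_nonneg h₃
    have e₄ : |x₄| = -x₄ := abs_of_nonpos h₄
    rw [e₁, e₂, e₃, e₄] at hmin ⊢
    apply orth5 a x₁ (-x₂) x₃ (-x₄) ha h₁ (neg_nonneg.mpr h₂) h₃ (neg_nonneg.mpr h₄)
    · grind [hmin _ _ _ _ (lat11 a)]
    · grind [hmin _ _ _ _ (lat2 a)]
    · grind [hmin _ _ _ _ (lat3 a).neg]
    · grind [hmin _ _ _ _ (lat5 a).neg]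
    · grind [hmin _ _ _ _ (lat4 a).neg]
    · grind [hmin _ _ _ _ (lat10 a)]
    · grind [hmin _ _ _ _ (lat7 a)]
    · grind [hmin _ _ _ _ (lat13 a)]
  · have e₂ : |x₂| = -x₂ := abs_of_nonpos h₂
    have e₃ : |x₃| = -x₃ := abs_of_nonpos h₃
    have e₄ : |x₄| = x₄ := abs_of_nonneg h₄
    rw [e₁, e₂, e₃, e₄] at hmin ⊢
    apply orth6 a x₁ (-x₂) (-x₃) x₄ ha h₁ (neg_nonneg.mpr h₂) (neg_nonneg.mpr h₃) h₄
    · grind [hmin _ _ _ _ (lat13 a)]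
    · grind [hmin _ _ _ _ (lat5 a)]
    · grind [hmin _ _ _ _ (lat4 a)]
    · grind [hmin _ _ _ _ (lat2 a)]
    · grind [hmin _ _ _ _ (lat3 a).neg]
    · grind [hmin _ _ _ _ (lat8 a)]
    · grind [hmin _ _ _ _ (lat6 a).neg]
    · grind [hmin _ _ _ _ (lat7 a)]
    · grind [hmin _ _ _ _ (lat11 a).neg]
    · grind [hmin _ _ _ _ (lat1 a)]
    · grind [hmin _ _ _ _ (lat12 a).neg]
  · have e₂ : |x₂| = -x₂ := abs_of_nonpos h₂
    have e₃ : |x₃| = -x₃ := abs_of_nonpos h₃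
    have e₄ : |x₄| = -x₄ := abs_of_nonpos h₄
    rw [e₁, e₂, e₃, e₄] at hmin ⊢
    apply orth7 a x₁ (-x₂) (-x₃) (-x₄) ha h₁ (neg_nonneg.mpr h₂) (neg_nonneg.mpr h₃) (neg_nonneg.mpr h₄)
    · grind [hmin _ _ _ _ (lat10 a)]
    · grind [hmin _ _ _ _ (lat4 a)]
    · grind [hmin _ _ _ _ (lat2 a)]
    · grind [hmin _ _ _ _ (lat3 a).neg]
    · grind [hmin _ _ _ _ (lat5 a).neg]
    · grind [hmin _ _ _ _ (lat13 a)]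
    · grind [hmin _ _ _ _ (lat12 a)]
    · grind [hmin _ _ _ _ (lat1 a).neg]
    · grind [hmin _ _ _ _ (lat8 a)]
    · grind [hmin _ _ _ _ (lat6 a).neg]
    · grind [hmin _ _ _ _ (lat7 a).neg]

theorem core (a x₁ x₂ x₃ x₄ : ℤ) (ha : 2 ≤ a)
    (hmin : ∀ v₁ v₂ v₃ v₄, RelLat a v₁ v₂ v₃ v₄ →
      |x₁| + |x₂| + |x₃| + |x₄| ≤ |x₁ - v₁| + |x₂ - v₂| + |x₃ - v₃| + |x₄ - v₄|) :
    |x₁| + |x₂| + |x₃| + |x₄| ≤ 2 * a := by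
  rcases le_total 0 x₁ with h | h
  · exact coreP a x₁ x₂ x₃ x₄ ha h hmin
  · have := coreP a (-x₁) (-x₂) (-x₃) (-x₄) ha (by omega) (by
      intro v₁ v₂ v₃ v₄ hv
      have := hmin _ _ _ _ hv.neg
      have e : ∀ x v : ℤ, |-x - v| = |x - -v| := fun x v => by
        rw [← abs_neg]; congr 1; ring
      simpa only [abs_neg, e] using this)
    simpa only [abs_neg] using this

theorem case_two : ∀ x : ZMod 32, ∃ c₁ c₂ c₃ c₄ : ℤ, |c₁| + |c₂| + |c₃| + |c₄| ≤ 2 ∧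
    x = ((c₁ + c₂ * 15 + c₃ * 4 + c₄ * 6 : ℤ) : ZMod 32) := by
  intro x
  fin_cases x
  · exact ⟨0, 0, 0, 0, by decide, rfl⟩
  · exact ⟨1, 0, 0, 0, by decide, rfl⟩
  · exact ⟨0, -2, 0, 0, by decide, rfl⟩
  · exact ⟨-1, 0, 1, 0, by decide, rfl⟩
  · exact ⟨0, 0, 1, 0, by decide, rfl⟩
  · exact ⟨-1, 0, 0, 1, by decide, rfl⟩
  · exact ⟨0, 0, 0, 1, by decide, rfl⟩
  · exact ⟨1, 0, 0, 1, by decide, rfl⟩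
  · exact ⟨0, 0, 2, 0, by decide, rfl⟩
  · exact ⟨0, 1, 0, -1, by decide, rfl⟩
  · exact ⟨0, 0, 1, 1, by decide, rfl⟩
  · exact ⟨0, -1, 0, -1, by decide, rfl⟩
  · exact ⟨0, 0, 0, 2, by decide, rfl⟩
  · exact ⟨0, -1, -1, 0, by decide, rfl⟩
  · exact ⟨-1, 1, 0, 0, by decide, rfl⟩
  · exact ⟨0, 1, 0, 0, by decide, rfl⟩
  · exact ⟨-1, -1, 0, 0, by decide, rfl⟩
  · exact ⟨0, -1, 0, 0, by decide, rfl⟩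
  · exact ⟨1, -1, 0, 0, by decide, rfl⟩
  · exact ⟨0, 1, 1, 0, by decide, rfl⟩
  · exact ⟨0, 0, 0, -2, by decide, rfl⟩
  · exact ⟨0, -1, 1, 0, by decide, rfl⟩
  · exact ⟨0, 0, -1, -1, by decide, rfl⟩
  · exact ⟨0, -1, 0, 1, by decide, rfl⟩
  · exact ⟨0, 0, -2, 0, by decide, rfl⟩
  · exact ⟨-1, 0, 0, -1, by decide, rfl⟩
  · exact ⟨0, 0, 0, -1, by decide, rfl⟩
  · exact ⟨-1, 0, -1, 0, by decide, rfl⟩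
  · exact ⟨0, 0, -1, 0, by decide, rfl⟩
  · exact ⟨1, 0, -1, 0, by decide, rfl⟩
  · exact ⟨-2, 0, 0, 0, by decide, rfl⟩
  · exact ⟨-1, 0, 0, 0, by decide, rfl⟩

/-- The circulant graph on `ℤ/nℤ`, `n = (k⁴ + 2k³ + 6k² + 4k)/2` for even `k ≥ 2`,
with connection set `{±1, ±(k³+2k²+6k+2)/2, ±(k⁴+4k²-8k)/4, ±(k⁴+4k²-4k)/4}`,
has diameter at most `k`: every element of `ℤ/nℤ` is an integer combination
`c₁g₁ + c₂g₂ + c₃g₃ + c₄g₄` with `|c₁| + |c₂| + |c₃| + |c₄| ≤ k`. -/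
theorem circulant_deg8_diameter_even (k : ℕ) (hk : 2 ≤ k) (hke : Even k)
    (n : ℕ) (hn : n = (k ^ 4 + 2 * k ^ 3 + 6 * k ^ 2 + 4 * k) / 2)
    (g₁ g₂ g₃ g₄ : ZMod n)
    (hg₁ : g₁ = 1)
    (hg₂ : g₂ = ((((k : ℤ) ^ 3 + 2 * k ^ 2 + 6 * k + 2) / 2 : ℤ) : ZMod n))
    (hg₃ : g₃ = ((((k : ℤ) ^ 4 + 4 * k ^ 2 - 8 * k) / 4 : ℤ) : ZMod n))
    (hg₄ : g₄ = ((((k : ℤ) ^ 4 + 4 * k ^ 2 - 4 * k) / 4 : ℤ) : ZMod n)) :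
    ∀ x : ZMod n, ∃ c₁ c₂ c₃ c₄ : ℤ,
      |c₁| + |c₂| + |c₃| + |c₄| ≤ (k : ℤ) ∧
      x = c₁ • g₁ + c₂ • g₂ + c₃ • g₃ + c₄ • g₄ := by
  obtain ⟨b, hb⟩ := hke
  obtain ⟨a, ha⟩ : ∃ a : ℤ, a = b := ⟨_, rfl⟩
  have hka : (k : ℤ) = 2 * a := by omega
  have ha1 : 1 ≤ a := by omega
  have e₂ : ((k : ℤ) ^ 3 + 2 * k ^ 2 + 6 * k + 2) / 2 = 4 * a ^ 3 + 4 * a ^ 2 + 6 * a + 1 := by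
    rw [hka]; apply Int.ediv_eq_of_eq_mul_right (by norm_num); ring
  have e₃ : ((k : ℤ) ^ 4 + 4 * k ^ 2 - 8 * k) / 4 = 4 * a ^ 4 + 4 * a ^ 2 - 4 * a := by
    rw [hka]; apply Int.ediv_eq_of_eq_mul_right (by norm_num); ring
  have e₄ : ((k : ℤ) ^ 4 + 4 * k ^ 2 - 4 * k) / 4 = 4 * a ^ 4 + 4 * a ^ 2 - 2 * a := by
    rw [hka]; apply Int.ediv_eq_of_eq_mul_right (by norm_num); ring
  have en : (n : ℤ) = 8 * a ^ 4 + 8 * a ^ 3 + 12 * a ^ 2 + 4 * a := by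
    rw [hn]; push_cast; rw [hka]; apply Int.ediv_eq_of_eq_mul_right (by norm_num); ring
  rw [e₂] at hg₂
  rw [e₃] at hg₃
  rw [e₄] at hg₄
  -- it suffices to work with integer representatives
  suffices H : ∀ x : ZMod n, ∃ c₁ c₂ c₃ c₄ : ℤ, |c₁| + |c₂| + |c₃| + |c₄| ≤ 2 * a ∧
      x = ((c₁ + c₂ * (4 * a ^ 3 + 4 * a ^ 2 + 6 * a + 1) + c₃ * (4 * a ^ 4 + 4 * a ^ 2 - 4 * a)
        + c₄ * (4 * a ^ 4 + 4 * a ^ 2 - 2 * a) : ℤ) : ZMod n) by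
    intro x
    obtain ⟨c₁, c₂, c₃, c₄, h, hx⟩ := H x
    refine ⟨c₁, c₂, c₃, c₄, by rw [hka]; exact h, ?_⟩
    rw [hx, hg₁, hg₂, hg₃, hg₄]
    simp only [zsmul_eq_mul]
    push_cast
    ring
  rcases eq_or_lt_of_le ha1 with h1 | h2
  · subst h1
    have hn32 : n = 32 := by norm_num at en; exact_mod_cast en
    subst hn32
    intro x
    obtain ⟨c₁, c₂, c₃, c₄, h, hx⟩ := case_two x
    exact ⟨c₁, c₂, c₃, c₄, by simpa using h, by rw [hx]; norm_num⟩
  · intro x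
    -- a representation of `x` of least length
    let P : ℕ → Prop := fun m => ∃ c₁ c₂ c₃ c₄ : ℤ, |c₁| + |c₂| + |c₃| + |c₄| = (m : ℤ) ∧
      x = ((c₁ + c₂ * (4 * a ^ 3 + 4 * a ^ 2 + 6 * a + 1) + c₃ * (4 * a ^ 4 + 4 * a ^ 2 - 4 * a)
        + c₄ * (4 * a ^ 4 + 4 * a ^ 2 - 2 * a) : ℤ) : ZMod n)
    have hP : ∃ m, P m := by
      obtain ⟨z, hz⟩ := ZMod.intCast_surjective x
      exact ⟨z.natAbs, z, 0, 0, 0, by simp, by simp [hz]⟩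
    classical
    obtain ⟨c₁, c₂, c₃, c₄, hm, hx⟩ := Nat.find_spec hP
    refine ⟨c₁, c₂, c₃, c₄, core a c₁ c₂ c₃ c₄ (by omega) ?_, hx⟩
    intro v₁ v₂ v₃ v₄ hv
    have hnn : 0 ≤ |c₁ - v₁| + |c₂ - v₂| + |c₃ - v₃| + |c₄ - v₄| := by positivity
    obtain ⟨m, hm'⟩ := Int.eq_ofNat_of_zero_le hnn
    have hPm : P m := by
      refine ⟨_, _, _, _, hm', ?_⟩
      rw [hx, ZMod.intCast_eq_intCast_iff_dvd_sub, en]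
      obtain ⟨t, ht⟩ := hv
      exact ⟨-t, by linear_combination -ht⟩
    have hle := Nat.find_min' hP hPm
    rw [hm, hm']
    exact_mod_cast hle
end

section
/- Let k ≥ 3 be an odd integer and set n = (k^4 + 2k^3 + 6k^2 + 6k + 1)/2. Let g₁ = 1, g₂ = (k^3 + k^2 + 5k + 3)/2, g₃ = (k^4 + 2k^2 - 8k - 11)/4, g₄ = (k^4 + 2k^2 - 4k - 7)/4, viewed as elements of ℤ/nℤ. Then for every x ∈ ℤ/nℤ there exist integers c₁, c₂, c₃, c₄ with |c₁| + |c₂| + |c₃| + |c₄| ≤ k and x = c₁·g₁ + c₂·g₂ + c₃·g₃ + c₄·g₄. (Equivalently, the undirected circulant graph on ℤ/nℤ with connection set {±g₁, ±g₂, ±g₃, ±g₄} has diameter at most k.) -/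
/-- The absolute-value splitting used for the norm of a difference. -/
theorem circ_split {a b c d N : ℤ} (h : N ≤ |a| + |b| + |c| + |d|) :
    ∃ s t u v, N ≤ s + t + u + v ∧ ((0 ≤ a ∧ s = a) ∨ (a ≤ -1 ∧ s = -a)) ∧
      ((0 ≤ b ∧ t = b) ∨ (b ≤ -1 ∧ t = -b)) ∧ ((0 ≤ c ∧ u = c) ∨ (c ≤ -1 ∧ u = -c)) ∧
      ((0 ≤ d ∧ v = d) ∨ (d ≤ -1 ∧ v = -d)) := by
  have sp (x : ℤ) : (0 ≤ x ∧ |x| = x) ∨ (x ≤ -1 ∧ |x| = -x) := by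
    rcases le_or_gt 0 x with h | h
    · exact Or.inl ⟨h, abs_of_nonneg h⟩
    · exact Or.inr ⟨by omega, abs_of_neg h⟩
  exact ⟨_, _, _, _, h, sp a, sp b, sp c, sp d⟩

/-- A symmetric relation containing the short vectors of the lattice of relations. -/
structure CircLat (m : ℤ) (L : ℤ → ℤ → ℤ → ℤ → Prop) : Prop where
  neg : ∀ {p q r s}, L p q r s → L (-p) (-q) (-r) (-s)
  va : L (0) (2*m+2) (1) (-1)
  vb : L (1) (1) (-2*m-1) (1)
  vc : L (1) (1) (1) (2*m+1)
  vd : L (2*m+2) (0) (1) (-1)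
  ve : L (0) (0) (2*m+2) (2*m)
  vf : L (m) (-m-2) (m) (-m-1)
  vg : L (m) (m) (m+1) (-m-2)
  vh : L (m+1) (-m-1) (-m-1) (-m)
  vi : L (m+1) (-m-1) (m+1) (m)
  vj : L (m+1) (m+1) (-m) (-m-1)
  vk : L (m+1) (m+1) (m+2) (m-1)
  vl : L (m+2) (-m) (-m) (m+1)
  vm : L (m+2) (m+2) (1-m) (m)

/-- `(a, b, c, d)` is not brought closer to the origin by a vector of `L`. -/
def CircFar (m : ℤ) (L : ℤ → ℤ → ℤ → ℤ → Prop) (a b c d : ℤ) : Prop :=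
  ∀ p q r s, L p q r s → 2 * m + 2 ≤ |a - p| + |b - q| + |c - r| + |d - s|

theorem circ_orthant_pppp {m a b c d : ℤ} {L : ℤ → ℤ → ℤ → ℤ → Prop} (hL : CircLat m L)
    (hm : 2 ≤ m) (ha : 0 ≤ a) (hb : 0 ≤ b) (hc : 0 ≤ c) (hd : 0 ≤ d)
    (hs : a + b + c + d = 2 * m + 2) (h : CircFar m L a b c d) : False := by
  have hc' := circ_split (h _ _ _ _ hL.vc)
  have hk' := circ_split (h _ _ _ _ hL.vk)
  have ha' := circ_split (h _ _ _ _ hL.va)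
  have hd' := circ_split (h _ _ _ _ hL.vd)
  have he' := circ_split (h _ _ _ _ hL.ve)
  have hbn' := circ_split (h _ _ _ _ (hL.neg hL.vb))
  have hi' := circ_split (h _ _ _ _ hL.vi)
  have hl' := circ_split (h _ _ _ _ hL.vl)
  have hm' := circ_split (h _ _ _ _ hL.vm)
  have hfn' := circ_split (h _ _ _ _ (hL.neg hL.vf))
  have hhn' := circ_split (h _ _ _ _ (hL.neg hL.vh))
  clear h hL
  grind -ring (splits := 50)

theorem circ_orthant_pppn {m a b c d : ℤ} {L : ℤ → ℤ → ℤ → ℤ → Prop} (hL : CircLat m L)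
    (hm : 2 ≤ m) (ha : 0 ≤ a) (hb : 0 ≤ b) (hc : 0 ≤ c) (hd : d ≤ 0)
    (hs : a + b + c - d = 2 * m + 2) (h : CircFar m L a b c d) : False := by
  have hg' := circ_split (h _ _ _ _ hL.vg)
  have ha' := circ_split (h _ _ _ _ hL.va)
  have hd' := circ_split (h _ _ _ _ hL.vd)
  have hbn' := circ_split (h _ _ _ _ (hL.neg hL.vb))
  have hcn' := circ_split (h _ _ _ _ (hL.neg hL.vc))
  have hj' := circ_split (h _ _ _ _ hL.vj)
  have hk' := circ_split (h _ _ _ _ hL.vk)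
  have hm' := circ_split (h _ _ _ _ hL.vm)
  clear h hL
  grind -ring (splits := 50)

theorem circ_orthant_ppnp {m a b c d : ℤ} {L : ℤ → ℤ → ℤ → ℤ → Prop} (hL : CircLat m L)
    (hm : 2 ≤ m) (ha : 0 ≤ a) (hb : 0 ≤ b) (hc : c ≤ 0) (hd : 0 ≤ d)
    (hs : a + b - c + d = 2 * m + 2) (h : CircFar m L a b c d) : False := by
  have hb' := circ_split (h _ _ _ _ hL.vb)
  have hm' := circ_split (h _ _ _ _ hL.vm)
  have ha' := circ_split (h _ _ _ _ hL.va)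
  have hc' := circ_split (h _ _ _ _ hL.vc)
  have hd' := circ_split (h _ _ _ _ hL.vd)
  have hh' := circ_split (h _ _ _ _ hL.vh)
  have hj' := circ_split (h _ _ _ _ hL.vj)
  have hl' := circ_split (h _ _ _ _ hL.vl)
  have hfn' := circ_split (h _ _ _ _ (hL.neg hL.vf))
  have hgn' := circ_split (h _ _ _ _ (hL.neg hL.vg))
  have hin' := circ_split (h _ _ _ _ (hL.neg hL.vi))
  clear h hL
  grind -ring (splits := 50)

theorem circ_orthant_pnpp {m a b c d : ℤ} {L : ℤ → ℤ → ℤ → ℤ → Prop} (hL : CircLat m L)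
    (hm : 2 ≤ m) (ha : 0 ≤ a) (hb : b ≤ 0) (hc : 0 ≤ c) (hd : 0 ≤ d)
    (hs : a - b + c + d = 2 * m + 2) (h : CircFar m L a b c d) : False := by
  have hi' := circ_split (h _ _ _ _ hL.vi)
  have hc' := circ_split (h _ _ _ _ hL.vc)
  have hd' := circ_split (h _ _ _ _ hL.vd)
  have he' := circ_split (h _ _ _ _ hL.ve)
  have han' := circ_split (h _ _ _ _ (hL.neg hL.va))
  have hbn' := circ_split (h _ _ _ _ (hL.neg hL.vb))
  have hf' := circ_split (h _ _ _ _ hL.vf)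
  have hk' := circ_split (h _ _ _ _ hL.vk)
  have hl' := circ_split (h _ _ _ _ hL.vl)
  have hgn' := circ_split (h _ _ _ _ (hL.neg hL.vg))
  have hjn' := circ_split (h _ _ _ _ (hL.neg hL.vj))
  clear h hL
  grind -ring (splits := 50)

theorem circ_orthant_pnpn {m a b c d : ℤ} {L : ℤ → ℤ → ℤ → ℤ → Prop} (hL : CircLat m L)
    (hm : 2 ≤ m) (ha : 0 ≤ a) (hb : b ≤ 0) (hc : 0 ≤ c) (hd : d ≤ 0)
    (hs : a - b + c - d = 2 * m + 2) (h : CircFar m L a b c d) : False := by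
  have hf' := circ_split (h _ _ _ _ hL.vf)
  have hd' := circ_split (h _ _ _ _ hL.vd)
  have han' := circ_split (h _ _ _ _ (hL.neg hL.va))
  have hbn' := circ_split (h _ _ _ _ (hL.neg hL.vb))
  have hcn' := circ_split (h _ _ _ _ (hL.neg hL.vc))
  have hg' := circ_split (h _ _ _ _ hL.vg)
  have hh' := circ_split (h _ _ _ _ hL.vh)
  have hi' := circ_split (h _ _ _ _ hL.vi)
  have hj' := circ_split (h _ _ _ _ hL.vj)
  have hk' := circ_split (h _ _ _ _ hL.vk)
  have hl' := circ_split (h _ _ _ _ hL.vl)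
  clear h hL
  grind -ring (splits := 50)

theorem circ_orthant_pnnp {m a b c d : ℤ} {L : ℤ → ℤ → ℤ → ℤ → Prop} (hL : CircLat m L)
    (hm : 2 ≤ m) (ha : 0 ≤ a) (hb : b ≤ 0) (hc : c ≤ 0) (hd : 0 ≤ d)
    (hs : a - b - c + d = 2 * m + 2) (h : CircFar m L a b c d) : False := by
  have hl' := circ_split (h _ _ _ _ hL.vl)
  have hb' := circ_split (h _ _ _ _ hL.vb)
  have hc' := circ_split (h _ _ _ _ hL.vc)
  have hd' := circ_split (h _ _ _ _ hL.vd)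
  have han' := circ_split (h _ _ _ _ (hL.neg hL.va))
  have hf' := circ_split (h _ _ _ _ hL.vf)
  have hh' := circ_split (h _ _ _ _ hL.vh)
  have hi' := circ_split (h _ _ _ _ hL.vi)
  have hgn' := circ_split (h _ _ _ _ (hL.neg hL.vg))
  have hjn' := circ_split (h _ _ _ _ (hL.neg hL.vj))
  have hkn' := circ_split (h _ _ _ _ (hL.neg hL.vk))
  clear h hL
  grind -ring (splits := 50)

theorem circ_orthant_pnnn {m a b c d : ℤ} {L : ℤ → ℤ → ℤ → ℤ → Prop} (hL : CircLat m L)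
    (hm : 2 ≤ m) (ha : 0 ≤ a) (hb : b ≤ 0) (hc : c ≤ 0) (hd : d ≤ 0)
    (hs : a - b - c - d = 2 * m + 2) (h : CircFar m L a b c d) : False := by
  have hh' := circ_split (h _ _ _ _ hL.vh)
  have hb' := circ_split (h _ _ _ _ hL.vb)
  have hd' := circ_split (h _ _ _ _ hL.vd)
  have han' := circ_split (h _ _ _ _ (hL.neg hL.va))
  have hcn' := circ_split (h _ _ _ _ (hL.neg hL.vc))
  have hen' := circ_split (h _ _ _ _ (hL.neg hL.ve))
  have hf' := circ_split (h _ _ _ _ hL.vf)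
  have hg' := circ_split (h _ _ _ _ hL.vg)
  have hj' := circ_split (h _ _ _ _ hL.vj)
  have hl' := circ_split (h _ _ _ _ hL.vl)
  have hkn' := circ_split (h _ _ _ _ (hL.neg hL.vk))
  clear h hL
  grind -ring (splits := 50)

theorem circ_orthant_ppnn {m a b c d : ℤ} {L : ℤ → ℤ → ℤ → ℤ → Prop} (hL : CircLat m L)
    (hm : 2 ≤ m) (ha : 0 ≤ a) (hb : 0 ≤ b) (hc : c ≤ 0) (hd : d ≤ 0)
    (hs : a + b - c - d = 2 * m + 2) (h : CircFar m L a b c d) : False := by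
  have hj' := circ_split (h _ _ _ _ hL.vj)
  have ha' := circ_split (h _ _ _ _ hL.va)
  have hb' := circ_split (h _ _ _ _ hL.vb)
  have hd' := circ_split (h _ _ _ _ hL.vd)
  have hcn' := circ_split (h _ _ _ _ (hL.neg hL.vc))
  have hen' := circ_split (h _ _ _ _ (hL.neg hL.ve))
  have hg' := circ_split (h _ _ _ _ hL.vg)
  have hh' := circ_split (h _ _ _ _ hL.vh)
  have hl' := circ_split (h _ _ _ _ hL.vl)
  have hm' := circ_split (h _ _ _ _ hL.vm)
  have hfn' := circ_split (h _ _ _ _ (hL.neg hL.vf))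
  have hin' := circ_split (h _ _ _ _ (hL.neg hL.vi))
  clear h hL
  grind -ring (splits := 50)

/-- One descent step: a vector of norm `2m+2` is moved into the ball of radius `2m+1`. -/
theorem circ_descent_pos {m a b c d : ℤ} {L : ℤ → ℤ → ℤ → ℤ → Prop} (hL : CircLat m L)
    (hm : 2 ≤ m) (ha : 0 ≤ a) (hs : |a| + |b| + |c| + |d| = 2 * m + 2) :
    ∃ p q r s, L p q r s ∧ |a - p| + |b - q| + |c - r| + |d - s| ≤ 2 * m + 1 := by
  by_contra hcon
  have h : CircFar m L a b c d := by
    intro p q r s hl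
    by_contra hlt
    exact hcon ⟨p, q, r, s, hl, by omega⟩
  rw [abs_of_nonneg ha] at hs
  rcases le_total 0 b with hb | hb <;> rcases le_total 0 c with hc | hc <;>
    rcases le_total 0 d with hd | hd <;>
    simp only [abs_of_nonneg, abs_of_nonpos, hb, hc, hd] at hs
  · exact circ_orthant_pppp hL hm ha hb hc hd (by omega) h
  · exact circ_orthant_pppn hL hm ha hb hc hd (by omega) h
  · exact circ_orthant_ppnp hL hm ha hb hc hd (by omega) h
  · exact circ_orthant_ppnn hL hm ha hb hc hd (by omega) h
  · exact circ_orthant_pnpp hL hm ha hb hc hd (by omega) h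
  · exact circ_orthant_pnpn hL hm ha hb hc hd (by omega) h
  · exact circ_orthant_pnnp hL hm ha hb hc hd (by omega) h
  · exact circ_orthant_pnnn hL hm ha hb hc hd (by omega) h

theorem circ_descent {m a b c d : ℤ} {L : ℤ → ℤ → ℤ → ℤ → Prop} (hL : CircLat m L)
    (hm : 2 ≤ m) (hs : |a| + |b| + |c| + |d| = 2 * m + 2) :
    ∃ p q r s, L p q r s ∧ |a - p| + |b - q| + |c - r| + |d - s| ≤ 2 * m + 1 := by
  rcases le_total 0 a with ha | ha
  · exact circ_descent_pos hL hm ha hs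
  · obtain ⟨p, q, r, s, hl, hle⟩ := circ_descent_pos (a := -a) (b := -b) (c := -c) (d := -d)
      hL hm (by omega) (by simpa only [abs_neg] using hs)
    refine ⟨-p, -q, -r, -s, hL.neg hl, ?_⟩
    have e (x y : ℤ) : |x - -y| = |-x - y| := by
      rw [← abs_neg]; congr 1; ring
    simpa only [e] using hle

/-- The relation lattice of the generators. -/
def CircRel (m : ℤ) (p q r s : ℤ) : Prop :=
  ∃ t : ℤ, p + q * (4 * m ^ 3 + 8 * m ^ 2 + 10 * m + 5)
    + r * (4 * m ^ 4 + 8 * m ^ 3 + 8 * m ^ 2 - 4)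
    + s * (4 * m ^ 4 + 8 * m ^ 3 + 8 * m ^ 2 + 2 * m - 2)
    = t * (8 * m ^ 4 + 24 * m ^ 3 + 36 * m ^ 2 + 28 * m + 8)

theorem circRel_lat (m : ℤ) : CircLat m (CircRel m) where
  neg := by
    rintro p q r s ⟨t, ht⟩
    exact ⟨-t, by linear_combination -ht⟩
  va := ⟨1, by ring⟩
  vb := ⟨-1 * m + (1), by ring⟩
  vc := ⟨1 * m + (0), by ring⟩
  vd := ⟨0, by ring⟩
  ve := ⟨2 * m + (-1), by ring⟩
  vf := ⟨-1, by ring⟩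
  vg := ⟨0, by ring⟩
  vh := ⟨-1 * m + (0), by ring⟩
  vi := ⟨1 * m + (-1), by ring⟩
  vj := ⟨-1 * m + (1), by ring⟩
  vk := ⟨1 * m + (0), by ring⟩
  vl := ⟨0, by ring⟩
  vm := ⟨1, by ring⟩

/-- Every integer has a short representation modulo `n`, for `m ≥ 2`. -/
theorem circ_main {m : ℤ} (hm : 2 ≤ m) (x : ℤ) : ∃ a b c d : ℤ,
    |a| + |b| + |c| + |d| ≤ 2 * m + 1 ∧ CircRel m (x - a) (-b) (-c) (-d) := by
  have step : ∀ x a b c d : ℤ, |a| + |b| + |c| + |d| ≤ 2 * m + 2 →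
      CircRel m (x - a) (-b) (-c) (-d) → ∃ a b c d : ℤ,
      |a| + |b| + |c| + |d| ≤ 2 * m + 1 ∧ CircRel m (x - a) (-b) (-c) (-d) := by
    intro x a b c d hle hx
    rcases lt_or_eq_of_le hle with hlt | heq
    · exact ⟨a, b, c, d, by omega, hx⟩
    · obtain ⟨p, q, r, s, ⟨t, ht⟩, h⟩ := circ_descent (circRel_lat m) hm heq
      obtain ⟨u, hu⟩ := hx
      exact ⟨_, _, _, _, h, t + u, by linear_combination ht + hu⟩
  induction x using Int.induction_on with
  | zero => exact ⟨0, 0, 0, 0, by simp; omega, 0, by ring⟩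
  | succ i ih =>
    obtain ⟨a, b, c, d, h, hr⟩ := ih
    refine step _ (a + 1) b c d ?_ ?_
    · have := abs_add_le a 1
      rw [abs_one] at this
      omega
    · rwa [add_sub_add_right_eq_sub]
  | pred i ih =>
    obtain ⟨a, b, c, d, h, hr⟩ := ih
    refine step _ (a - 1) b c d ?_ ?_
    · have := abs_sub a 1
      rw [abs_one] at this
      omega
    · rwa [sub_sub_sub_cancel_right]

/-- Distance from `3`, in natural number arithmetic. -/
def circDist (x : ℕ) : ℕ := (x - 3) + (3 - x)

/-- Coefficients for the residues modulo `104`, shifted by `3` and written in base `7`. -/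
def circCodes : List ℕ := [
    1200, 1201, 1202, 1493, 1494, 1291, 863, 864, 865, 1585, 1157, 1158, 955, 1879, 1247, 1248,
    1249, 1250, 1541, 1542, 1543, 1544, 1545, 1179, 1837, 1205, 1206, 1207, 1208, 1209, 843, 1297,
    1298, 1299, 1137, 1591, 1592, 507, 1165, 1885, 1886, 801, 1255, 1256, 171, 1095, 1549, 1550,
    465, 1185, 1186, 1187, 759, 1213, 1214, 1215, 849, 850, 851, 1305, 1143, 1144, 1145, 513, 514,
    515, 1235, 807, 808, 809, 1529, 1101, 1102, 899, 1557, 1191, 1192, 1193, 1194, 1195, 563,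
    1487, 855, 856, 857, 858, 1149, 1150, 1151, 1152, 1153, 521, 1241, 1242, 1243, 815, 1535,
    1536, 1537, 905, 906, 1197, 1198, 1199]

/-- The code `w` gives a short representation of the residue `r` modulo `104`. -/
def circCheck (r w : ℕ) : Bool :=
  Nat.beq ((r + 192) % 104)
    ((w % 7 + w / 7 % 7 * 27 + w / 49 % 7 * 16 + w / 343 * 20) % 104) &&
  Nat.ble (circDist (w % 7) + circDist (w / 7 % 7) + circDist (w / 49 % 7)
    + circDist (w / 343)) 3

/-- The case `k = 3`, by a finite check. -/
theorem circ_three :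
    ((List.range 104).all fun r => circCheck r (circCodes.getD r 0)) = true := by
  decide +kernel

theorem circ_main' {m : ℤ} (hm : 1 ≤ m) (x : ℤ) : ∃ a b c d : ℤ,
    |a| + |b| + |c| + |d| ≤ 2 * m + 1 ∧ CircRel m (x - a) (-b) (-c) (-d) := by
  rcases lt_or_eq_of_le hm with h | rfl
  · exact circ_main (by omega) x
  · have h3 := List.all_eq_true.1 circ_three (x % 104).toNat (List.mem_range.2 (by omega))
    generalize circCodes.getD (x % 104).toNat 0 = w at h3
    simp only [circCheck, Bool.and_eq_true, Nat.ble_eq, Nat.beq_eq] at h3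
    obtain ⟨h0, h⟩ := h3
    generalize w % 7 = a, w / 7 % 7 = b, w / 49 % 7 = c, w / 343 = d at h h0
    have e (z : ℕ) : |(z : ℤ) - 3| = (circDist z : ℤ) := by
      unfold circDist
      rcases le_total (3 : ℤ) z with hz | hz
      · rw [abs_of_nonneg (by omega)]; omega
      · rw [abs_of_nonpos (by omega)]; omega
    refine ⟨(a : ℤ) - 3, (b : ℤ) - 3, (c : ℤ) - 3, (d : ℤ) - 3, ?_, ?_⟩
    · simp only [e]; omega
    · exact ⟨(x - (a - 3) - (b - 3) * 27 - (c - 3) * 16 - (d - 3) * 20) / 104, by omega⟩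

/-- The circulant graph on `ℤ/nℤ`, `n = (k⁴ + 2k³ + 6k² + 6k + 1)/2` for odd `k ≥ 3`,
with connection set `{±1, ±(k³+k²+5k+3)/2, ±(k⁴+2k²-8k-11)/4, ±(k⁴+2k²-4k-7)/4}`,
has diameter at most `k`. -/
theorem circulant_deg8_diameter_odd (k : ℕ) (hk : 3 ≤ k) (hko : Odd k)
    (n : ℕ) (hn : n = (k ^ 4 + 2 * k ^ 3 + 6 * k ^ 2 + 6 * k + 1) / 2)
    (g₁ g₂ g₃ g₄ : ZMod n)
    (hg₁ : g₁ = 1)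
    (hg₂ : g₂ = ((((k : ℤ) ^ 3 + k ^ 2 + 5 * k + 3) / 2 : ℤ) : ZMod n))
    (hg₃ : g₃ = ((((k : ℤ) ^ 4 + 2 * k ^ 2 - 8 * k - 11) / 4 : ℤ) : ZMod n))
    (hg₄ : g₄ = ((((k : ℤ) ^ 4 + 2 * k ^ 2 - 4 * k - 7) / 4 : ℤ) : ZMod n)) :
    ∀ x : ZMod n, ∃ c₁ c₂ c₃ c₄ : ℤ,
      |c₁| + |c₂| + |c₃| + |c₄| ≤ (k : ℤ) ∧
      x = c₁ • g₁ + c₂ • g₂ + c₃ • g₃ + c₄ • g₄ := by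
  obtain ⟨m, rfl⟩ := hko
  have en : n = 8 * m ^ 4 + 24 * m ^ 3 + 36 * m ^ 2 + 28 * m + 8 := by
    rw [hn]
    exact Nat.div_eq_of_eq_mul_right (by norm_num) (by ring)
  have e2 : (((2 * m + 1 : ℕ) : ℤ) ^ 3 + (2 * m + 1 : ℕ) ^ 2 + 5 * (2 * m + 1 : ℕ) + 3) / 2
      = 4 * (m : ℤ) ^ 3 + 8 * m ^ 2 + 10 * m + 5 :=
    Int.ediv_eq_of_eq_mul_right (by norm_num) (by push_cast; ring)
  have e3 : (((2 * m + 1 : ℕ) : ℤ) ^ 4 + 2 * (2 * m + 1 : ℕ) ^ 2 - 8 * (2 * m + 1 : ℕ) - 11) / 4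
      = 4 * (m : ℤ) ^ 4 + 8 * m ^ 3 + 8 * m ^ 2 - 4 :=
    Int.ediv_eq_of_eq_mul_right (by norm_num) (by push_cast; ring)
  have e4 : (((2 * m + 1 : ℕ) : ℤ) ^ 4 + 2 * (2 * m + 1 : ℕ) ^ 2 - 4 * (2 * m + 1 : ℕ) - 7) / 4
      = 4 * (m : ℤ) ^ 4 + 8 * m ^ 3 + 8 * m ^ 2 + 2 * m - 2 :=
    Int.ediv_eq_of_eq_mul_right (by norm_num) (by push_cast; ring)
  rw [e2] at hg₂
  rw [e3] at hg₃
  rw [e4] at hg₄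
  have hn0 : (8 * (m : ZMod n) ^ 4 + 24 * m ^ 3 + 36 * m ^ 2 + 28 * m + 8) = 0 := by
    have h := congrArg (fun z : ℕ => (z : ZMod n)) en
    simp only [ZMod.natCast_self] at h
    push_cast at h
    exact h.symm
  intro x
  obtain ⟨y, rfl⟩ := ZMod.intCast_surjective x
  obtain ⟨a, b, c, d, h, t, ht⟩ := circ_main' (m := (m : ℤ)) (by omega) y
  refine ⟨a, b, c, d, by push_cast; exact h, ?_⟩
  have ht' := congrArg (fun z : ℤ => (z : ZMod n)) ht
  push_cast at ht'
  rw [hg₁, hg₂, hg₃, hg₄]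
  simp only [zsmul_eq_mul]
  push_cast
  linear_combination ht' + (t : ZMod n) * hn0
end

section
/- Let k ≥ 2 be even, a = k/2, and let L ⊆ ℤ⁴ be the ℤ-span of v₁ = (-a-1, a+1, a, -a+1), v₂ = (a-1, a+1, a+1, -a), v₃ = (-a-1, -a+1, a+1, -a), v₄ = (-a, -a, a, a+1). Then for every x ∈ ℤ⁴ there exists w ∈ L with ‖x - w‖₁ ≤ k, where ‖y‖₁ = |y₁| + |y₂| + |y₃| + |y₄|. (Equivalently, S_k + L = ℤ⁴, where S_k is the set of points of ℤ⁴ at l¹-distance at most k from the origin.) -/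
/-- The `l¹` distance from `(x0,x1,x2,x3)` to the lattice point with coefficients `c0..c3`. -/
def latDist (a x0 x1 x2 x3 c0 c1 c2 c3 : ℤ) : ℤ :=
  |x0 - (c0 * (-a - 1) + c1 * (a - 1) + c2 * (-a - 1) + c3 * (-a))|
  + |x1 - (c0 * (a + 1) + c1 * (a + 1) + c2 * (-a + 1) + c3 * (-a))|
  + |x2 - (c0 * a + c1 * (a + 1) + c2 * (a + 1) + c3 * a)|
  + |x3 - (c0 * (-a + 1) + c1 * (-a) + c2 * (-a) + c3 * (a + 1))|

set_option maxHeartbeats 0 in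
/-- Points at distance exactly `2a+1` from the origin have another lattice point within `2a`. -/
lemma core_two (a x0 x1 x2 x3 : ℤ) (ha : 2 ≤ a) (p0 : 0 ≤ x0)
    (hs : |x0| + |x1| + |x2| + |x3| = 2 * a + 1)
    (H : ∀ c0 c1 c2 c3, 2 * a + 1 ≤ latDist a x0 x1 x2 x3 c0 c1 c2 c3) : False := by
  have h0 := H (-1) 0 0 0
  have h1 := H 1 0 0 0
  have h2 := H (-1) 0 1 (-1)
  have h3 := H 1 0 (-1) 1
  have h4 := H (-1) 0 1 0
  have h5 := H 1 0 (-1) 0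
  have h6 := H (-1) 1 0 0
  have h7 := H 1 (-1) 0 0
  have h8 := H (-1) 1 0 1
  have h9 := H 1 (-1) 0 (-1)
  have h10 := H (-1) 1 1 0
  have h11 := H 1 (-1) (-1) 0
  have h12 := H 0 (-1) 0 (-1)
  have h13 := H 0 1 0 1
  have h14 := H 0 (-1) 0 0
  have h15 := H 0 1 0 0
  have h16 := H 0 (-1) 1 (-1)
  have h17 := H 0 1 (-1) 1
  have h18 := H 0 (-1) 1 0
  have h19 := H 0 1 (-1) 0
  have h20 := H 0 0 (-1) 0
  have h21 := H 0 0 1 0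
  have h22 := H 0 0 (-1) 1
  have h23 := H 0 0 1 (-1)
  have h24 := H 0 0 0 (-1)
  have h25 := H 0 0 0 1
  clear H
  rw [abs_of_nonneg p0] at hs
  rcases le_total 0 x1 with p1 | p1 <;> rcases le_total 0 x2 with p2 | p2 <;>
    rcases le_total 0 x3 with p3 | p3 <;>
    simp only [abs_of_nonneg, abs_of_nonpos, p1, p2, p3] at hs <;>
    simp only [latDist, abs_eq_max_neg] at * <;>
    grind -ring (splits := 200)

set_option maxHeartbeats 0 in
/-- Points at distance exactly `2a+1` from the origin have another lattice point within `2a`. -/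
lemma core_one (a x0 x1 x2 x3 : ℤ) (ha : a = 1) (p0 : 0 ≤ x0)
    (hs : |x0| + |x1| + |x2| + |x3| = 2 * a + 1)
    (H : ∀ c0 c1 c2 c3, 2 * a + 1 ≤ latDist a x0 x1 x2 x3 c0 c1 c2 c3) : False := by
  have h0 := H (-1) 0 0 0
  have h1 := H 1 0 0 0
  have h2 := H (-1) 0 1 (-1)
  have h3 := H 1 0 (-1) 1
  have h4 := H (-1) 0 1 0
  have h5 := H 1 0 (-1) 0
  have h6 := H (-1) 1 0 0
  have h7 := H 1 (-1) 0 0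
  have h8 := H (-1) 1 0 1
  have h9 := H 1 (-1) 0 (-1)
  have h10 := H (-1) 1 1 0
  have h11 := H 1 (-1) (-1) 0
  have h12 := H 0 (-1) 0 (-1)
  have h13 := H 0 1 0 1
  have h14 := H 0 (-1) 0 0
  have h15 := H 0 1 0 0
  have h16 := H 0 (-1) 1 (-1)
  have h17 := H 0 1 (-1) 1
  have h18 := H 0 (-1) 1 0
  have h19 := H 0 1 (-1) 0
  have h20 := H 0 0 (-1) 0
  have h21 := H 0 0 1 0
  have h22 := H 0 0 (-1) 1
  have h23 := H 0 0 1 (-1)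
  have h24 := H 0 0 0 (-1)
  have h25 := H 0 0 0 1
  have h26 := H (-1) (-1) 1 0
  have h27 := H 1 1 (-1) 0
  have h28 := H (-1) 1 (-1) 0
  have h29 := H 1 (-1) 1 0
  clear H
  subst ha
  rw [abs_of_nonneg p0] at hs
  rcases le_total 0 x1 with p1 | p1 <;> rcases le_total 0 x2 with p2 | p2 <;>
    rcases le_total 0 x3 with p3 | p3 <;>
    simp only [abs_of_nonneg, abs_of_nonpos, p1, p2, p3] at hs <;>
    simp only [latDist, abs_eq_max_neg] at * <;>
    grind -ring (splits := 200)

lemma core_s2 (a x0 x1 x2 x3 : ℤ) (ha : 1 ≤ a) (p0 : 0 ≤ x0)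
    (hs : |x0| + |x1| + |x2| + |x3| = 2 * a + 1)
    (H : ∀ c0 c1 c2 c3, 2 * a + 1 ≤ latDist a x0 x1 x2 x3 c0 c1 c2 c3) : False := by
  rcases eq_or_lt_of_le ha with h | h
  · exact core_one a x0 x1 x2 x3 h.symm p0 hs H
  · exact core_two a x0 x1 x2 x3 (by omega) p0 hs H

lemma local_step (a x0 x1 x2 x3 : ℤ) (ha : 1 ≤ a)
    (hs : |x0| + |x1| + |x2| + |x3| ≤ 2 * a + 1) :
    ∃ c0 c1 c2 c3, latDist a x0 x1 x2 x3 c0 c1 c2 c3 ≤ 2 * a := by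
  by_contra hc
  push Not at hc
  have H : ∀ c0 c1 c2 c3, 2 * a + 1 ≤ latDist a x0 x1 x2 x3 c0 c1 c2 c3 :=
    fun c0 c1 c2 c3 => hc c0 c1 c2 c3
  have h0 := H 0 0 0 0
  simp only [latDist, zero_mul, add_zero, sub_zero] at h0
  have hs' := le_antisymm hs h0
  rcases le_total 0 x0 with p0 | p0
  · exact core_s2 a x0 x1 x2 x3 ha p0 hs' H
  · refine core_s2 a (-x0) (-x1) (-x2) (-x3) ha (by omega) (by simpa only [abs_neg] using hs') ?_
    intro c0 c1 c2 c3
    refine (H (-c0) (-c1) (-c2) (-c3)).trans (le_of_eq ?_)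
    unfold latDist
    congr 1
    · congr 1
      · congr 1
        · rw [← abs_neg]; congr 1; ring
        · rw [← abs_neg]; congr 1; ring
      · rw [← abs_neg]; congr 1; ring
    · rw [← abs_neg]; congr 1; ring

/-- The covering property of a point. -/
def Cov (a x0 x1 x2 x3 : ℤ) : Prop :=
  ∃ c0 c1 c2 c3, latDist a x0 x1 x2 x3 c0 c1 c2 c3 ≤ 2 * a

lemma cov_step (a x0 x1 x2 x3 y0 y1 y2 y3 : ℤ) (ha : 1 ≤ a) (h : Cov a x0 x1 x2 x3)
    (hd : |y0 - x0| + |y1 - x1| + |y2 - x2| + |y3 - x3| ≤ 1) : Cov a y0 y1 y2 y3 := by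
  obtain ⟨c0, c1, c2, c3, hc⟩ := h
  unfold latDist at hc
  set w0 := c0 * (-a - 1) + c1 * (a - 1) + c2 * (-a - 1) + c3 * (-a) with e0
  set w1 := c0 * (a + 1) + c1 * (a + 1) + c2 * (-a + 1) + c3 * (-a) with e1
  set w2 := c0 * a + c1 * (a + 1) + c2 * (a + 1) + c3 * a with e2
  set w3 := c0 * (-a + 1) + c1 * (-a) + c2 * (-a) + c3 * (a + 1) with e3
  have t0 := abs_sub_le y0 x0 w0
  have t1 := abs_sub_le y1 x1 w1
  have t2 := abs_sub_le y2 x2 w2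
  have t3 := abs_sub_le y3 x3 w3
  obtain ⟨d0, d1, d2, d3, hd'⟩ := local_step a (y0 - w0) (y1 - w1) (y2 - w2) (y3 - w3) ha
    (by linarith)
  refine ⟨c0 + d0, c1 + d1, c2 + d2, c3 + d3, le_trans (le_of_eq ?_) hd'⟩
  unfold latDist
  congr 1
  · congr 1
    · congr 1
      · congr 1; rw [e0]; ring
      · congr 1; rw [e1]; ring
    · congr 1; rw [e2]; ring
  · congr 1; rw [e3]; ring

lemma cov_all (a : ℤ) (ha : 1 ≤ a) (x0 x1 x2 x3 : ℤ) : Cov a x0 x1 x2 x3 := by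
  induction x0 using Int.induction_on with
  | zero =>
    induction x1 using Int.induction_on with
    | zero =>
      induction x2 using Int.induction_on with
      | zero =>
        induction x3 using Int.induction_on with
        | zero => exact ⟨0, 0, 0, 0, by simp [latDist]; omega⟩
        | succ i ih => exact cov_step _ _ _ _ _ _ _ _ _ ha ih (by simp)
        | pred i ih => exact cov_step _ _ _ _ _ _ _ _ _ ha ih (by simp [abs_le]; omega)
      | succ i ih => exact cov_step _ _ _ _ _ _ _ _ _ ha ih (by simp)
      | pred i ih => exact cov_step _ _ _ _ _ _ _ _ _ ha ih (by simp [abs_le]; omega)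
    | succ i ih => exact cov_step _ _ _ _ _ _ _ _ _ ha ih (by simp)
    | pred i ih => exact cov_step _ _ _ _ _ _ _ _ _ ha ih (by simp [abs_le]; omega)
  | succ i ih => exact cov_step _ _ _ _ _ _ _ _ _ ha ih (by simp)
  | pred i ih => exact cov_step _ _ _ _ _ _ _ _ _ ha ih (by simp [abs_le]; omega)

/-- For even `k ≥ 2`, `a = k/2`, the lattice `L` spanned by the four given vectors
satisfies `S_k + L = ℤ⁴`: every point of `ℤ⁴` is within `l¹`-distance `k` of `L`. -/
theorem lattice_covers_even (k a : ℤ) (hk : 2 ≤ k) (hke : Even k) (ha : a = k / 2)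
    (v₁ v₂ v₃ v₄ : Fin 4 → ℤ)
    (hv₁ : v₁ = ![-a - 1, a + 1, a, -a + 1])
    (hv₂ : v₂ = ![a - 1, a + 1, a + 1, -a])
    (hv₃ : v₃ = ![-a - 1, -a + 1, a + 1, -a])
    (hv₄ : v₄ = ![-a, -a, a, a + 1])
    (L : Submodule ℤ (Fin 4 → ℤ))
    (hL : L = Submodule.span ℤ {v₁, v₂, v₃, v₄}) :
    ∀ x : Fin 4 → ℤ, ∃ w ∈ L,
      |x 0 - w 0| + |x 1 - w 1| + |x 2 - w 2| + |x 3 - w 3| ≤ k := by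
  intro x
  have hk2 : k = 2 * a := by
    obtain ⟨m, hm⟩ := hke
    omega
  obtain ⟨c0, c1, c2, c3, hc⟩ := cov_all a (by omega) (x 0) (x 1) (x 2) (x 3)
  refine ⟨c0 • v₁ + c1 • v₂ + c2 • v₃ + c3 • v₄, ?_, ?_⟩
  · rw [hL]
    refine add_mem (add_mem (add_mem ?_ ?_) ?_) ?_ <;>
      exact Submodule.smul_mem _ _ (Submodule.subset_span (by simp))
  · rw [hk2]
    refine le_trans (le_of_eq ?_) hc
    subst hv₁ hv₂ hv₃ hv₄
    simp [latDist]
end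

section
/- Let a ≥ 1 be an integer and let L ⊆ ℤ⁴ be the ℤ-span of v₁ = (-a-1, a+1, a, -a+1), v₂ = (a-1, a+1, a+1, -a), v₃ = (-a-1, -a+1, a+1, -a), v₄ = (-a, -a, a, a+1). Then the vectors (4a³+4a²+6a+1, -1, 0, 0), (4a⁴+4a²-4a, 0, -1, 0), and (4a⁴+4a²-2a, 0, 0, -1) all lie in L; consequently, in the quotient group ℤ⁴/L one has e₂ = (4a³+4a²+6a+1)·e₁, e₃ = (4a⁴+4a²-4a)·e₁, e₄ = (4a⁴+4a²-2a)·e₁, so ℤ⁴/L is cyclic generated by the class of e₁. -/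
/-- For `a ≥ 1` and `L` the span of `v₁, v₂, v₃, v₄` (even case), the three vectors
`(4a³+4a²+6a+1, -1, 0, 0)`, `(4a⁴+4a²-4a, 0, -1, 0)`, `(4a⁴+4a²-2a, 0, 0, -1)` lie
in `L`; hence in `ℤ⁴/L` the classes of `e₂, e₃, e₄` are the indicated multiples of
the class of `e₁`, and `ℤ⁴/L` is cyclic generated by the class of `e₁`. -/
theorem quotient_cyclic_even (a : ℤ) (ha : 1 ≤ a)
    (v₁ v₂ v₃ v₄ : Fin 4 → ℤ)
    (hv₁ : v₁ = ![-a - 1, a + 1, a, -a + 1])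
    (hv₂ : v₂ = ![a - 1, a + 1, a + 1, -a])
    (hv₃ : v₃ = ![-a - 1, -a + 1, a + 1, -a])
    (hv₄ : v₄ = ![-a, -a, a, a + 1])
    (L : Submodule ℤ (Fin 4 → ℤ))
    (hL : L = Submodule.span ℤ {v₁, v₂, v₃, v₄}) :
    (![4 * a ^ 3 + 4 * a ^ 2 + 6 * a + 1, -1, 0, 0] ∈ L) ∧
    (![4 * a ^ 4 + 4 * a ^ 2 - 4 * a, 0, -1, 0] ∈ L) ∧
    (![4 * a ^ 4 + 4 * a ^ 2 - 2 * a, 0, 0, -1] ∈ L) ∧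
    ((Submodule.Quotient.mk (![0, 1, 0, 0] : Fin 4 → ℤ) : (Fin 4 → ℤ) ⧸ L) =
      (4 * a ^ 3 + 4 * a ^ 2 + 6 * a + 1) • Submodule.Quotient.mk ![1, 0, 0, 0]) ∧
    ((Submodule.Quotient.mk (![0, 0, 1, 0] : Fin 4 → ℤ) : (Fin 4 → ℤ) ⧸ L) =
      (4 * a ^ 4 + 4 * a ^ 2 - 4 * a) • Submodule.Quotient.mk ![1, 0, 0, 0]) ∧
    ((Submodule.Quotient.mk (![0, 0, 0, 1] : Fin 4 → ℤ) : (Fin 4 → ℤ) ⧸ L) =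
      (4 * a ^ 4 + 4 * a ^ 2 - 2 * a) • Submodule.Quotient.mk ![1, 0, 0, 0]) ∧
    (∀ y : (Fin 4 → ℤ) ⧸ L, ∃ m : ℤ,
      y = m • Submodule.Quotient.mk ![1, 0, 0, 0]) := by
  have comb : ∀ p q r s : ℤ, p • v₁ + q • v₂ + r • v₃ + s • v₄ ∈ L := by
    intro p q r s
    have m₁ : v₁ ∈ L := hL ▸ Submodule.subset_span (by simp)
    have m₂ : v₂ ∈ L := hL ▸ Submodule.subset_span (by simp)
    have m₃ : v₃ ∈ L := hL ▸ Submodule.subset_span (by simp)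
    have m₄ : v₄ ∈ L := hL ▸ Submodule.subset_span (by simp)
    exact L.add_mem (L.add_mem (L.add_mem (L.smul_mem p m₁) (L.smul_mem q m₂))
      (L.smul_mem r m₃)) (L.smul_mem s m₄)
  have h₂ : ![4 * a ^ 3 + 4 * a ^ 2 + 6 * a + 1, -1, 0, 0] ∈ L := by
    convert comb (-(2 * a ^ 2 + 2 * a + 1)) (2 * a ^ 2 + a + 2) (-(a + 2)) 1 using 1
    subst hv₁ hv₂ hv₃ hv₄
    ext i
    fin_cases i <;> simp <;> ring
  have h₃ : ![4 * a ^ 4 + 4 * a ^ 2 - 4 * a, 0, -1, 0] ∈ L := by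
    convert comb (-(2 * a ^ 3 - 1)) (2 * a ^ 3 - a ^ 2 + 2 * a - 2) (-(a ^ 2 + a - 1))
      (a - 1) using 1
    subst hv₁ hv₂ hv₃ hv₄
    ext i
    fin_cases i <;> simp <;> ring
  have h₄ : ![4 * a ^ 4 + 4 * a ^ 2 - 2 * a, 0, 0, -1] ∈ L := by
    convert comb (-(2 * a ^ 3)) (2 * a ^ 3 - a ^ 2 + 2 * a - 1) (-(a ^ 2 + a - 1))
      (a - 1) using 1
    subst hv₁ hv₂ hv₃ hv₄
    ext i
    fin_cases i <;> simp <;> ring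
  refine ⟨h₂, h₃, h₄, ?_, ?_, ?_, ?_⟩
  · rw [← Submodule.Quotient.mk_smul, Submodule.Quotient.eq]
    convert L.neg_mem h₂ using 1
    ext i
    fin_cases i <;> simp
  · rw [← Submodule.Quotient.mk_smul, Submodule.Quotient.eq]
    convert L.neg_mem h₃ using 1
    ext i
    fin_cases i <;> simp
  · rw [← Submodule.Quotient.mk_smul, Submodule.Quotient.eq]
    convert L.neg_mem h₄ using 1
    ext i
    fin_cases i <;> simp
  · intro y
    obtain ⟨x, rfl⟩ := Submodule.Quotient.mk_surjective L y
    refine ⟨x 0 + x 1 * (4 * a ^ 3 + 4 * a ^ 2 + 6 * a + 1)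
      + x 2 * (4 * a ^ 4 + 4 * a ^ 2 - 4 * a) + x 3 * (4 * a ^ 4 + 4 * a ^ 2 - 2 * a), ?_⟩
    rw [← Submodule.Quotient.mk_smul, Submodule.Quotient.eq]
    convert L.neg_mem (L.add_mem (L.add_mem (L.smul_mem (x 1) h₂) (L.smul_mem (x 2) h₃))
      (L.smul_mem (x 3) h₄)) using 1
    ext i
    fin_cases i <;> simp <;> ring
end

section
/- Let a ≥ 2 be an integer and let L ⊆ ℤ⁴ be the ℤ-span of v₁ = (-a+1, a+1, -a+1, a), v₂ = (a+1, a+1, -a+2, a-1), v₃ = (-a-1, a-1, a-1, -a), v₄ = (-a, a, a, a-1). Then the vectors (4a³-4a²+6a-1, -1, 0, 0), (4a⁴-8a³+8a²-8a, 0, -1, 0), and (4a⁴-8a³+8a²-6a, 0, 0, -1) all lie in L; consequently, in the quotient group ℤ⁴/L one has e₂ = (4a³-4a²+6a-1)·e₁, e₃ = (4a⁴-8a³+8a²-8a)·e₁, e₄ = (4a⁴-8a³+8a²-6a)·e₁, so ℤ⁴/L is cyclic generated by the class of e₁. -/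
/-- For `a ≥ 2` and `L` the span of `v₁, v₂, v₃, v₄` (odd case), the three vectors
`(4a³-4a²+6a-1, -1, 0, 0)`, `(4a⁴-8a³+8a²-8a, 0, -1, 0)`, `(4a⁴-8a³+8a²-6a, 0, 0, -1)`
lie in `L`; hence in `ℤ⁴/L` the classes of `e₂, e₃, e₄` are the indicated multiples of
the class of `e₁`, and `ℤ⁴/L` is cyclic generated by the class of `e₁`. -/
theorem quotient_cyclic_odd (a : ℤ) (ha : 2 ≤ a)
    (v₁ v₂ v₃ v₄ : Fin 4 → ℤ)
    (hv₁ : v₁ = ![-a + 1, a + 1, -a + 1, a])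
    (hv₂ : v₂ = ![a + 1, a + 1, -a + 2, a - 1])
    (hv₃ : v₃ = ![-a - 1, a - 1, a - 1, -a])
    (hv₄ : v₄ = ![-a, a, a, a - 1])
    (L : Submodule ℤ (Fin 4 → ℤ))
    (hL : L = Submodule.span ℤ {v₁, v₂, v₃, v₄}) :
    (![4 * a ^ 3 - 4 * a ^ 2 + 6 * a - 1, -1, 0, 0] ∈ L) ∧
    (![4 * a ^ 4 - 8 * a ^ 3 + 8 * a ^ 2 - 8 * a, 0, -1, 0] ∈ L) ∧
    (![4 * a ^ 4 - 8 * a ^ 3 + 8 * a ^ 2 - 6 * a, 0, 0, -1] ∈ L) ∧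
    ((Submodule.Quotient.mk (![0, 1, 0, 0] : Fin 4 → ℤ) : (Fin 4 → ℤ) ⧸ L) =
      (4 * a ^ 3 - 4 * a ^ 2 + 6 * a - 1) • Submodule.Quotient.mk ![1, 0, 0, 0]) ∧
    ((Submodule.Quotient.mk (![0, 0, 1, 0] : Fin 4 → ℤ) : (Fin 4 → ℤ) ⧸ L) =
      (4 * a ^ 4 - 8 * a ^ 3 + 8 * a ^ 2 - 8 * a) • Submodule.Quotient.mk ![1, 0, 0, 0]) ∧
    ((Submodule.Quotient.mk (![0, 0, 0, 1] : Fin 4 → ℤ) : (Fin 4 → ℤ) ⧸ L) =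
      (4 * a ^ 4 - 8 * a ^ 3 + 8 * a ^ 2 - 6 * a) • Submodule.Quotient.mk ![1, 0, 0, 0]) ∧
    (∀ y : (Fin 4 → ℤ) ⧸ L, ∃ m : ℤ,
      y = m • Submodule.Quotient.mk ![1, 0, 0, 0]) := by
  have m₁ : v₁ ∈ L := by rw [hL]; exact Submodule.subset_span (by simp)
  have m₂ : v₂ ∈ L := by rw [hL]; exact Submodule.subset_span (by simp)
  have m₃ : v₃ ∈ L := by rw [hL]; exact Submodule.subset_span (by simp)
  have m₄ : v₄ ∈ L := by rw [hL]; exact Submodule.subset_span (by simp)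
  have comb : ∀ c₁ c₂ c₃ c₄ : ℤ, c₁ • v₁ + c₂ • v₂ + c₃ • v₃ + c₄ • v₄ ∈ L :=
    fun c₁ c₂ c₃ c₄ => L.add_mem (L.add_mem (L.add_mem (L.smul_mem _ m₁) (L.smul_mem _ m₂))
      (L.smul_mem _ m₃)) (L.smul_mem _ m₄)
  have h2 : ![4 * a ^ 3 - 4 * a ^ 2 + 6 * a - 1, -1, 0, 0] ∈ L := by
    convert comb (-(2 * a ^ 2 - 3 * a + 2)) (2 * a ^ 2 - 2 * a + 1) (-a) (-1) using 1
    subst hv₁ hv₂ hv₃ hv₄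
    ext i
    fin_cases i <;> simp <;> ring
  have h3 : ![4 * a ^ 4 - 8 * a ^ 3 + 8 * a ^ 2 - 8 * a, 0, -1, 0] ∈ L := by
    convert comb (-(2 * a ^ 3 - 5 * a ^ 2 + 4 * a - 2)) (2 * a ^ 3 - 4 * a ^ 2 + 2 * a - 1)
      (-(a ^ 2 - a - 1)) (-(a - 1)) using 1
    subst hv₁ hv₂ hv₃ hv₄
    ext i
    fin_cases i <;> simp <;> ring
  have h4 : ![4 * a ^ 4 - 8 * a ^ 3 + 8 * a ^ 2 - 6 * a, 0, 0, -1] ∈ L := by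
    convert comb (-(2 * a ^ 3 - 5 * a ^ 2 + 4 * a - 1)) (2 * a ^ 3 - 4 * a ^ 2 + 2 * a)
      (-(a ^ 2 - a - 1)) (-(a - 1)) using 1
    subst hv₁ hv₂ hv₃ hv₄
    ext i
    fin_cases i <;> simp <;> ring
  refine ⟨h2, h3, h4, ?_, ?_, ?_, ?_⟩
  · rw [← Submodule.Quotient.mk_smul, Submodule.Quotient.eq]
    convert L.neg_mem h2 using 1
    ext i
    fin_cases i <;> simp
  · rw [← Submodule.Quotient.mk_smul, Submodule.Quotient.eq]
    convert L.neg_mem h3 using 1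
    ext i
    fin_cases i <;> simp
  · rw [← Submodule.Quotient.mk_smul, Submodule.Quotient.eq]
    convert L.neg_mem h4 using 1
    ext i
    fin_cases i <;> simp
  · intro y
    obtain ⟨x, rfl⟩ := Submodule.Quotient.mk_surjective L y
    refine ⟨x 0 + x 1 * (4 * a ^ 3 - 4 * a ^ 2 + 6 * a - 1)
      + x 2 * (4 * a ^ 4 - 8 * a ^ 3 + 8 * a ^ 2 - 8 * a)
      + x 3 * (4 * a ^ 4 - 8 * a ^ 3 + 8 * a ^ 2 - 6 * a), ?_⟩
    rw [← Submodule.Quotient.mk_smul, Submodule.Quotient.eq]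
    convert L.add_mem (L.add_mem (L.smul_mem (-x 1) h2) (L.smul_mem (-x 2) h3))
      (L.smul_mem (-x 3) h4) using 1
    ext i
    fin_cases i <;> simp
    ring
end

section
/- Let k ≥ 4 be even, a = k/2, and let L ⊆ ℤ⁴ be the ℤ-span of v₁ = (-a-1, a+1, a, -a+1), v₂ = (a-1, a+1, a+1, -a), v₃ = (-a-1, -a+1, a+1, -a), v₄ = (-a, -a, a, a+1). Then for every x ∈ ℤ⁴ there exists w ∈ L such that every coordinate of x - w has absolute value at most a + 1. -/
/-- The point `(x, y, z, t)` lies in the box of radius `M`. -/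
def InBox (M x y z t : ℤ) : Prop :=
  (-M ≤ x ∧ x ≤ M) ∧ (-M ≤ y ∧ y ≤ M) ∧ (-M ≤ z ∧ z ≤ M) ∧ (-M ≤ t ∧ t ≤ M)

/-- The point minus the combination of the generators with coefficients `p q r s`
lies in the box of radius `M`. -/
def RedBox (a M x y z t p q r s : ℤ) : Prop :=
  InBox M (x - (p * (-a - 1) + q * (a - 1) + r * (-a - 1) + s * (-a)))
    (y - (p * (a + 1) + q * (a + 1) + r * (-a + 1) + s * (-a)))
    (z - (p * a + q * (a + 1) + r * (a + 1) + s * a))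
    (t - (p * (-a + 1) + q * (-a) + r * (-a) + s * (a + 1)))

/-- One reduction step by a sign-matched vector. -/
lemma red_step (a M x y z t : ℤ) (ha : 2 ≤ a) (hM : a + 2 ≤ M) (h : InBox M x y z t) :
    ∃ p q r s, RedBox a (M - 1) x y z t p q r s := by
  unfold RedBox
  unfold InBox at *
  rcases lt_or_ge x 0 with hx | hx <;> rcases lt_or_ge y 0 with hy | hy <;>
    rcases lt_or_ge z 0 with hz | hz <;> rcases lt_or_ge t 0 with ht | ht
  · exact ⟨0, -1, 1, -1, by omega⟩
  · exact ⟨0, -1, 0, 0, by omega⟩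
  · exact ⟨0, 0, 1, 0, by omega⟩
  · exact ⟨0, 0, 0, 1, by omega⟩
  · exact ⟨1, -1, 0, -1, by omega⟩
  · exact ⟨1, -1, -1, 0, by omega⟩
  · exact ⟨1, 0, 0, 0, by omega⟩
  · rcases eq_or_ne t 0 with h0 | h0
    · exact ⟨1, 0, 0, 0, by omega⟩
    · exact ⟨1, 0, -1, 1, by omega⟩
  · exact ⟨-1, 0, 1, -1, by omega⟩
  · exact ⟨-1, 0, 0, 0, by omega⟩
  · rcases eq_or_ne z 0 with h0 | h0
    · exact ⟨-1, 0, 1, -1, by omega⟩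
    · exact ⟨-1, 1, 1, 0, by omega⟩
  · exact ⟨-1, 1, 0, 1, by omega⟩
  · exact ⟨0, 0, 0, -1, by omega⟩
  · exact ⟨0, 0, -1, 0, by omega⟩
  · exact ⟨0, 1, 0, 0, by omega⟩
  · exact ⟨0, 1, -1, 1, by omega⟩

/-- Iterating the reduction step. -/
lemma red_all (a : ℤ) (ha : 2 ≤ a) (n : ℕ) : ∀ x y z t : ℤ, InBox (a + 1 + n) x y z t →
    ∃ p q r s, RedBox a (a + 1) x y z t p q r s := by
  induction n with
  | zero =>
    intro x y z t h
    exact ⟨0, 0, 0, 0, by simpa [RedBox] using h⟩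
  | succ n ih =>
    intro x y z t h
    obtain ⟨p, q, r, s, h1⟩ := red_step a _ x y z t ha (by push_cast; omega) h
    have e : a + 1 + ((n + 1 : ℕ) : ℤ) - 1 = a + 1 + n := by push_cast; ring
    rw [e] at h1
    obtain ⟨p', q', r', s', h2⟩ := ih _ _ _ _ h1
    refine ⟨p + p', q + q', r + r', s + s', ?_⟩
    unfold RedBox at h2 ⊢
    convert h2 using 1 <;> ring

/-- For even `k ≥ 4`, `a = k/2`, every point of `ℤ⁴` can be reduced modulo the
lattice `L` to a point all of whose coordinates have absolute value at most `a + 1`. -/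
theorem lattice_reduce_box_even (k a : ℤ) (hk : 4 ≤ k) (hke : Even k) (ha : a = k / 2)
    (v₁ v₂ v₃ v₄ : Fin 4 → ℤ)
    (hv₁ : v₁ = ![-a - 1, a + 1, a, -a + 1])
    (hv₂ : v₂ = ![a - 1, a + 1, a + 1, -a])
    (hv₃ : v₃ = ![-a - 1, -a + 1, a + 1, -a])
    (hv₄ : v₄ = ![-a, -a, a, a + 1])
    (L : Submodule ℤ (Fin 4 → ℤ))
    (hL : L = Submodule.span ℤ {v₁, v₂, v₃, v₄}) :
    ∀ x : Fin 4 → ℤ, ∃ w ∈ L, ∀ i : Fin 4, |x i - w i| ≤ a + 1 := by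
  intro x
  have ha2 : 2 ≤ a := by omega
  obtain ⟨p, q, r, s, h⟩ := red_all a ha2 (|x 0| + |x 1| + |x 2| + |x 3|).toNat
    (x 0) (x 1) (x 2) (x 3) (by
      have h0 := abs_nonneg (x 0)
      have h1 := abs_nonneg (x 1)
      have h2 := abs_nonneg (x 2)
      have h3 := abs_nonneg (x 3)
      rw [Int.toNat_of_nonneg (by positivity)]
      unfold InBox
      refine ⟨abs_le.1 ?_, abs_le.1 ?_, abs_le.1 ?_, abs_le.1 ?_⟩ <;> linarith)
  refine ⟨p • v₁ + q • v₂ + r • v₃ + s • v₄, ?_, ?_⟩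
  · subst hL
    refine add_mem (add_mem (add_mem ?_ ?_) ?_) ?_ <;>
      exact Submodule.smul_mem _ _ (Submodule.subset_span (by simp))
  · obtain ⟨h0, h1, h2, h3⟩ := h
    subst hv₁ hv₂ hv₃ hv₄
    intro i
    rw [abs_le]
    fin_cases i
    · simpa using h0
    · simpa using h1
    · simpa using h2
    · simpa using h3
end

section
/- Let k ≥ 5 be odd, a = (k+1)/2, and let L ⊆ ℤ⁴ be the ℤ-span of v₁ = (-a+1, a+1, -a+1, a), v₂ = (a+1, a+1, -a+2, a-1), v₃ = (-a-1, a-1, a-1, -a), v₄ = (-a, a, a, a-1). Then for every x ∈ ℤ⁴ there exists w ∈ L such that every coordinate of x - w has absolute value at most a + 1. -/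
/-- Iterating a reduction step that uses a sign-matched lattice vector. -/
theorem reduce_of_sign_matched (b : ℤ) (hb : 0 ≤ b) (L : Submodule ℤ (Fin 4 → ℤ))
    (h : ∀ x : Fin 4 → ℤ, ∃ v ∈ L, ∀ i, (0 ≤ x i → 1 ≤ v i ∧ v i ≤ b) ∧
      (x i < 0 → 1 ≤ - v i ∧ - v i ≤ b)) (n : ℕ) :
    ∀ x : Fin 4 → ℤ, (∀ i, |x i| ≤ b + n) → ∃ w ∈ L, ∀ i, |x i - w i| ≤ b := by
  induction n with
  | zero =>
    intro x hx
    exact ⟨0, L.zero_mem, fun i => by simpa using hx i⟩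
  | succ n ih =>
    intro x hx
    obtain ⟨v, hv, hs⟩ := h x
    obtain ⟨w, hw, hr⟩ := ih (x - v) (fun i => by
      have h1 := hx i
      obtain ⟨h2, h3⟩ := hs i
      rw [abs_le] at h1 ⊢
      push_cast at h1
      simp only [Pi.sub_apply]
      rcases lt_or_ge (x i) 0 with h0 | h0
      · have := h3 h0
        constructor <;> omega
      · have := h2 h0
        constructor <;> omega)
    refine ⟨v + w, L.add_mem hv hw, fun i => ?_⟩
    have := hr i
    simp only [Pi.sub_apply, Pi.add_apply] at this ⊢
    rwa [← sub_sub]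

/-- For odd `k ≥ 5`, `a = (k+1)/2`, every point of `ℤ⁴` can be reduced modulo the
lattice `L` to a point all of whose coordinates have absolute value at most `a + 1`. -/
theorem lattice_reduce_box_odd (k a : ℤ) (hk : 5 ≤ k) (hko : Odd k) (ha : a = (k + 1) / 2)
    (v₁ v₂ v₃ v₄ : Fin 4 → ℤ)
    (hv₁ : v₁ = ![-a + 1, a + 1, -a + 1, a])
    (hv₂ : v₂ = ![a + 1, a + 1, -a + 2, a - 1])
    (hv₃ : v₃ = ![-a - 1, a - 1, a - 1, -a])
    (hv₄ : v₄ = ![-a, a, a, a - 1])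
    (L : Submodule ℤ (Fin 4 → ℤ))
    (hL : L = Submodule.span ℤ {v₁, v₂, v₃, v₄}) :
    ∀ x : Fin 4 → ℤ, ∃ w ∈ L, ∀ i : Fin 4, |x i - w i| ≤ a + 1 := by
  have ha3 : 3 ≤ a := by omega
  have m1 : v₁ ∈ L := hL ▸ Submodule.subset_span (by simp)
  have m2 : v₂ ∈ L := hL ▸ Submodule.subset_span (by simp)
  have m3 : v₃ ∈ L := hL ▸ Submodule.subset_span (by simp)
  have m4 : v₄ ∈ L := hL ▸ Submodule.subset_span (by simp)
  have m5 : v₁ - v₂ - v₄ ∈ L := L.sub_mem (L.sub_mem m1 m2) m4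
  have m6 : v₂ + v₃ - v₄ ∈ L := L.sub_mem (L.add_mem m2 m3) m4
  have m7 : v₁ + v₃ - v₄ ∈ L := L.sub_mem (L.add_mem m1 m3) m4
  have m8 : v₁ - v₂ - v₃ ∈ L := L.sub_mem (L.sub_mem m1 m2) m3
  have key : ∀ x : Fin 4 → ℤ, ∃ v ∈ L, ∀ i, (0 ≤ x i → 1 ≤ v i ∧ v i ≤ a + 1) ∧
      (x i < 0 → 1 ≤ - v i ∧ - v i ≤ a + 1) := by
    intro x
    rcases lt_or_ge (x 0) 0 with h0 | h0 <;> rcases lt_or_ge (x 1) 0 with h1 | h1 <;>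
      rcases lt_or_ge (x 2) 0 with h2 | h2 <;> rcases lt_or_ge (x 3) 0 with h3 | h3
    on_goal 1 => refine ⟨_, m5, ?_⟩
    on_goal 2 => refine ⟨_, m8, ?_⟩
    on_goal 3 => refine ⟨_, L.neg_mem m2, ?_⟩
    on_goal 4 => refine ⟨_, L.neg_mem m6, ?_⟩
    on_goal 5 => refine ⟨_, m7, ?_⟩
    on_goal 6 => refine ⟨_, m1, ?_⟩
    on_goal 7 => refine ⟨_, m3, ?_⟩
    on_goal 8 => refine ⟨_, m4, ?_⟩
    on_goal 9 => refine ⟨_, L.neg_mem m4, ?_⟩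
    on_goal 10 => refine ⟨_, L.neg_mem m3, ?_⟩
    on_goal 11 => refine ⟨_, L.neg_mem m1, ?_⟩
    on_goal 12 => refine ⟨_, L.neg_mem m7, ?_⟩
    on_goal 13 => refine ⟨_, m6, ?_⟩
    on_goal 14 => refine ⟨_, m2, ?_⟩
    on_goal 15 => refine ⟨_, L.neg_mem m8, ?_⟩
    on_goal 16 => refine ⟨_, L.neg_mem m5, ?_⟩
    all_goals
      clear m1 m2 m3 m4 m5 m6 m7 m8 hL
      subst hv₁ hv₂ hv₃ hv₄
      simp only [Fin.forall_fin_succ, Fin.forall_fin_zero_pi, Pi.add_apply, Pi.sub_apply,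
        Pi.neg_apply]
      simp
      omega
  intro x
  refine reduce_of_sign_matched (a + 1) (by omega) L key
    (|x 0| + |x 1| + |x 2| + |x 3|).toNat x (fun i => ?_)
  have e0 := abs_nonneg (x 0)
  have e1 := abs_nonneg (x 1)
  have e2 := abs_nonneg (x 2)
  have e3 := abs_nonneg (x 3)
  rw [Int.toNat_of_nonneg (by positivity)]
  fin_cases i <;> simp only [Fin.zero_eta, Fin.mk_one, Fin.reduceFinMk] <;> linarith
end

section
/- Let k ≥ 4 be even, a = k/2, and let L ⊆ ℤ⁴ be the ℤ-span of v₁ = (-a-1, a+1, a, -a+1), v₂ = (a-1, a+1, a+1, -a), v₃ = (-a-1, -a+1, a+1, -a), v₄ = (-a, -a, a, a+1). Then for every x ∈ ℤ⁴ all of whose coordinates have absolute value at most a + 1, there exists w ∈ L with ‖x - w‖₁ ≤ k, where ‖y‖₁ = |y₁| + |y₂| + |y₃| + |y₄|. -/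
/-- `2 * a` is smaller than any upper bound for the distance from `x` to a lattice point. -/
def Far (a x0 x1 x2 x3 : ℤ) : Prop :=
  ∀ c1 c2 c3 c4 e0 e1 e2 e3 : ℤ,
    (-e0 ≤ x0 - (c1 * (-a - 1) + c2 * (a - 1) + c3 * (-a - 1) + c4 * (-a)) ∧
      x0 - (c1 * (-a - 1) + c2 * (a - 1) + c3 * (-a - 1) + c4 * (-a)) ≤ e0) →
    (-e1 ≤ x1 - (c1 * (a + 1) + c2 * (a + 1) + c3 * (-a + 1) + c4 * (-a)) ∧
      x1 - (c1 * (a + 1) + c2 * (a + 1) + c3 * (-a + 1) + c4 * (-a)) ≤ e1) →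
    (-e2 ≤ x2 - (c1 * a + c2 * (a + 1) + c3 * (a + 1) + c4 * a) ∧
      x2 - (c1 * a + c2 * (a + 1) + c3 * (a + 1) + c4 * a) ≤ e2) →
    (-e3 ≤ x3 - (c1 * (-a + 1) + c2 * (-a) + c3 * (-a) + c4 * (a + 1)) ∧
      x3 - (c1 * (-a + 1) + c2 * (-a) + c3 * (-a) + c4 * (a + 1)) ≤ e3) →
    2 * a < e0 + e1 + e2 + e3

/-- The defining property of `Far`, with the four coordinate estimates left to `omega`. -/
lemma Far.bound {a x0 x1 x2 x3 : ℤ} (H : Far a x0 x1 x2 x3) (c1 c2 c3 c4 e0 e1 e2 e3 : ℤ)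
    (h0 : -e0 ≤ x0 - (c1 * (-a - 1) + c2 * (a - 1) + c3 * (-a - 1) + c4 * (-a)) ∧
      x0 - (c1 * (-a - 1) + c2 * (a - 1) + c3 * (-a - 1) + c4 * (-a)) ≤ e0 := by omega)
    (h1 : -e1 ≤ x1 - (c1 * (a + 1) + c2 * (a + 1) + c3 * (-a + 1) + c4 * (-a)) ∧
      x1 - (c1 * (a + 1) + c2 * (a + 1) + c3 * (-a + 1) + c4 * (-a)) ≤ e1 := by omega)
    (h2 : -e2 ≤ x2 - (c1 * a + c2 * (a + 1) + c3 * (a + 1) + c4 * a) ∧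
      x2 - (c1 * a + c2 * (a + 1) + c3 * (a + 1) + c4 * a) ≤ e2 := by omega)
    (h3 : -e3 ≤ x3 - (c1 * (-a + 1) + c2 * (-a) + c3 * (-a) + c4 * (a + 1)) ∧
      x3 - (c1 * (-a + 1) + c2 * (-a) + c3 * (-a) + c4 * (a + 1)) ≤ e3 := by omega) :
    2 * a < e0 + e1 + e2 + e3 :=
  H c1 c2 c3 c4 e0 e1 e2 e3 h0 h1 h2 h3

/-- The absolute value of `t`, packaged in the form used by `omega`. -/
lemma exists_abs (t : ℤ) : ∃ d : ℤ, -d ≤ t ∧ t ≤ d ∧ ((0 ≤ t ∧ d = t) ∨ (t < 0 ∧ d = -t)) := by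
  rcases le_or_gt 0 t with h | h
  · exact ⟨t, by omega, by omega, by omega⟩
  · exact ⟨-t, by omega, by omega, by omega⟩

lemma orthant_pppp (a x0 x1 x2 x3 : ℤ) (ha : 2 ≤ a)
    (l0 : 0 ≤ x0) (u0 : x0 ≤ a + 1) (l1 : 0 ≤ x1) (u1 : x1 ≤ a + 1)
    (l2 : 0 ≤ x2) (u2 : x2 ≤ a + 1) (l3 : 0 ≤ x3) (u3 : x3 ≤ a + 1)
    (H : Far a x0 x1 x2 x3) : False := by
  obtain ⟨d0, _, _, _⟩ := exists_abs (x0 - a)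
  obtain ⟨d1, _, _, _⟩ := exists_abs (x1 - a)
  obtain ⟨d2, _, _, _⟩ := exists_abs (x2 - a)
  obtain ⟨d3, _, _, _⟩ := exists_abs (x2 - 1)
  obtain ⟨d4, _, _, _⟩ := exists_abs (x3 - 1)
  obtain ⟨d5, _, _, _⟩ := exists_abs (x0 - (a - 1))
  obtain ⟨d6, _, _, _⟩ := exists_abs (x1 - 1)
  obtain ⟨d7, _, _, _⟩ := exists_abs (x3 - a)
  obtain ⟨d8, _, _, _⟩ := exists_abs (x1 - (a - 1))
  obtain ⟨d9, _, _, _⟩ := exists_abs (x3 - 2)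
  have hz := H.bound 0 0 0 0 x0 x1 x2 x3
  have h0 := H.bound 0 1 (-1) 1 d0 d1 d2 (a + 1 - x3)
  have h1 := H.bound (-1) 1 0 0 (2*a - x0) x1 d3 (x3 - (-1))
  have h2 := H.bound 1 0 (-1) 0 x0 (2*a - x1) (x2 - (-1)) d4
  have h3 := H.bound 0 1 0 0 d5 (a + 1 - x1) (a + 1 - x2) (x3 - (-a))
  have h4 := H.bound 0 1 0 1 (x0 - (-1)) d6 (2*a + 1 - x2) d4
  have h5 := H.bound (-1) 1 0 1 d0 (x1 - (-a)) (a + 1 - x2) d7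
  have h6 := H.bound 0 1 (-1) 0 (2*a - x0) (2*a - x1) x2 x3
  have h7 := H.bound 0 0 (-1) 0 (a + 1 - x0) d8 (x2 - (-a - 1)) d7
  have h8 := H.bound (-1) 2 0 1 (2*a - 1 - x0) d6 (2*a + 2 - x2) x3
  have h9 := H.bound (-1) 1 (-1) 1 (2*a + 1 - x0) (x1 - (-1)) x2 (2*a - x3)
  have h10 := H.bound 0 1 (-1) 2 x0 x1 (2*a - x2) (2*a + 2 - x3)
  have h11 := H.bound 1 1 (-1) 1 (x0 - (-1)) (2*a + 1 - x1) (2*a - x2) d9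
  have h12 := H.bound 0 2 (-1) 1 (2*a - 1 - x0) (2*a + 1 - x1) (2*a + 1 - x2) d4
  clear H
  omega

lemma orthant_pppn (a x0 x1 x2 x3 : ℤ) (ha : 2 ≤ a)
    (l0 : 0 ≤ x0) (u0 : x0 ≤ a + 1) (l1 : 0 ≤ x1) (u1 : x1 ≤ a + 1)
    (l2 : 0 ≤ x2) (u2 : x2 ≤ a + 1) (l3 : x3 ≤ 0) (u3 : -x3 ≤ a + 1)
    (H : Far a x0 x1 x2 x3) : False := by
  obtain ⟨d0, _, _, _⟩ := exists_abs (x0 - (a - 1))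
  obtain ⟨d1, _, _, _⟩ := exists_abs ((-x3) - a)
  obtain ⟨d2, _, _, _⟩ := exists_abs (x2 - 1)
  obtain ⟨d3, _, _, _⟩ := exists_abs ((-x3) - 1)
  obtain ⟨d4, _, _, _⟩ := exists_abs (x0 - a)
  obtain ⟨d5, _, _, _⟩ := exists_abs (x1 - a)
  obtain ⟨d6, _, _, _⟩ := exists_abs (x1 - 1)
  obtain ⟨d7, _, _, _⟩ := exists_abs (x2 - a)
  obtain ⟨d8, _, _, _⟩ := exists_abs (x2 - 2)
  have hz := H.bound 0 0 0 0 x0 x1 x2 (-x3)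
  have h0 := H.bound 0 1 0 0 d0 (a + 1 - x1) (a + 1 - x2) d1
  have h1 := H.bound (-1) 1 0 0 (2*a - x0) x1 d2 d3
  have h2 := H.bound 0 0 0 (-1) d4 d5 (x2 - (-a)) (a + 1 - (-x3))
  have h3 := H.bound 0 0 1 (-1) (x0 - (-1)) d6 d2 (2*a + 1 - (-x3))
  have h4 := H.bound 0 1 (-1) 1 d4 d5 d7 ((-x3) - (-a - 1))
  have h5 := H.bound (-1) 1 1 0 d0 (x1 - (-a + 1)) (a + 2 - x2) (a + 1 - (-x3))
  have h6 := H.bound 0 1 (-1) 0 (2*a - x0) (2*a - x1) x2 ((-x3) - 0)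
  have h7 := H.bound (-1) 1 1 (-1) (2*a - 1 - x0) d6 d8 (2*a + 2 - (-x3))
  have h8 := H.bound (-1) 2 0 1 (2*a - 1 - x0) d6 (2*a + 2 - x2) ((-x3) - 0)
  have h9 := H.bound (-1) 1 0 1 d4 (x1 - (-a)) (a + 1 - x2) ((-x3) - (-a))
  have h10 := H.bound 1 0 0 (-1) (x0 - (-1)) (2*a + 1 - x1) x2 (2*a - (-x3))
  have h11 := H.bound 0 1 0 (-1) (2*a - 1 - x0) (2*a + 1 - x1) d2 (2*a + 1 - (-x3))
  clear H
  omega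

lemma orthant_ppnp (a x0 x1 x2 x3 : ℤ) (ha : 2 ≤ a)
    (l0 : 0 ≤ x0) (u0 : x0 ≤ a + 1) (l1 : 0 ≤ x1) (u1 : x1 ≤ a + 1)
    (l2 : x2 ≤ 0) (u2 : -x2 ≤ a + 1) (l3 : 0 ≤ x3) (u3 : x3 ≤ a + 1)
    (H : Far a x0 x1 x2 x3) : False := by
  obtain ⟨d0, _, _, _⟩ := exists_abs (x1 - (a - 1))
  obtain ⟨d1, _, _, _⟩ := exists_abs (x3 - a)
  obtain ⟨d2, _, _, _⟩ := exists_abs ((-x2) - 1)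
  obtain ⟨d3, _, _, _⟩ := exists_abs (x3 - 1)
  obtain ⟨d4, _, _, _⟩ := exists_abs (x0 - a)
  obtain ⟨d5, _, _, _⟩ := exists_abs (x1 - a)
  obtain ⟨d6, _, _, _⟩ := exists_abs (x0 - 1)
  obtain ⟨d7, _, _, _⟩ := exists_abs ((-x2) - a)
  obtain ⟨d8, _, _, _⟩ := exists_abs ((-x2) - 2)
  have hz := H.bound 0 0 0 0 x0 x1 (-x2) x3
  have h0 := H.bound 0 0 (-1) 0 (a + 1 - x0) d0 (a + 1 - (-x2)) d1
  have h1 := H.bound 1 0 (-1) 0 x0 (2*a - x1) d2 d3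
  have h2 := H.bound 0 1 (-1) 1 d4 d5 ((-x2) - (-a)) (a + 1 - x3)
  have h3 := H.bound 0 0 (-1) 1 d6 (x1 - (-1)) d2 (2*a + 1 - x3)
  have h4 := H.bound 0 0 0 (-1) d4 d5 d7 (x3 - (-a - 1))
  have h5 := H.bound 1 (-1) (-1) 0 (x0 - (-a + 1)) d0 (a + 2 - (-x2)) (a + 1 - x3)
  have h6 := H.bound 0 1 (-1) 0 (2*a - x0) (2*a - x1) ((-x2) - 0) x3
  have h7 := H.bound 1 0 (-2) 1 d6 (2*a - 1 - x1) d8 (2*a + 2 - x3)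
  have h8 := H.bound 1 (-1) (-1) (-1) d6 (2*a - 1 - x1) (2*a + 2 - (-x2)) x3
  have h9 := H.bound (-1) 1 (-1) 1 (2*a + 1 - x0) (x1 - (-1)) ((-x2) - 0) (2*a - x3)
  have h10 := H.bound 1 (-1) 0 (-1) (x0 - (-a)) d5 (a + 1 - (-x2)) (x3 - (-a))
  have h11 := H.bound 0 1 (-2) 1 (2*a + 1 - x0) (2*a - 1 - x1) d2 (2*a + 1 - x3)
  clear H
  omega

lemma orthant_ppnn (a x0 x1 x2 x3 : ℤ) (ha : 2 ≤ a)
    (l0 : 0 ≤ x0) (u0 : x0 ≤ a + 1) (l1 : 0 ≤ x1) (u1 : x1 ≤ a + 1)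
    (l2 : x2 ≤ 0) (u2 : -x2 ≤ a + 1) (l3 : x3 ≤ 0) (u3 : -x3 ≤ a + 1)
    (H : Far a x0 x1 x2 x3) : False := by
  obtain ⟨d0, _, _, _⟩ := exists_abs (x0 - a)
  obtain ⟨d1, _, _, _⟩ := exists_abs (x1 - a)
  obtain ⟨d2, _, _, _⟩ := exists_abs ((-x2) - a)
  obtain ⟨d3, _, _, _⟩ := exists_abs ((-x3) - 1)
  obtain ⟨d4, _, _, _⟩ := exists_abs ((-x2) - 1)
  obtain ⟨d5, _, _, _⟩ := exists_abs (x1 - (a - 1))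
  obtain ⟨d6, _, _, _⟩ := exists_abs (x0 - 1)
  obtain ⟨d7, _, _, _⟩ := exists_abs ((-x3) - a)
  obtain ⟨d8, _, _, _⟩ := exists_abs (x0 - (a - 1))
  obtain ⟨d9, _, _, _⟩ := exists_abs ((-x3) - 2)
  have hz := H.bound 0 0 0 0 x0 x1 (-x2) (-x3)
  have h0 := H.bound 0 0 0 (-1) d0 d1 d2 (a + 1 - (-x3))
  have h1 := H.bound (-1) 1 0 0 (2*a - x0) x1 ((-x2) - (-1)) d3
  have h2 := H.bound 1 0 (-1) 0 x0 (2*a - x1) d4 ((-x3) - (-1))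
  have h3 := H.bound 0 0 (-1) 0 (a + 1 - x0) d5 (a + 1 - (-x2)) ((-x3) - (-a))
  have h4 := H.bound 0 (-1) 0 (-1) d6 (x1 - (-1)) (2*a + 1 - (-x2)) d3
  have h5 := H.bound 1 (-1) 0 (-1) (x0 - (-a)) d1 (a + 1 - (-x2)) d7
  have h6 := H.bound 0 1 (-1) 0 (2*a - x0) (2*a - x1) ((-x2) - 0) ((-x3) - 0)
  have h7 := H.bound 0 1 0 0 d8 (a + 1 - x1) ((-x2) - (-a - 1)) d7
  have h8 := H.bound 1 (-1) (-1) (-1) d6 (2*a - 1 - x1) (2*a + 2 - (-x2)) ((-x3) - 0)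
  have h9 := H.bound (-1) 0 0 (-1) (2*a + 1 - x0) (x1 - (-1)) (2*a - (-x2)) d9
  have h10 := H.bound 0 (-1) 1 (-2) x0 x1 (2*a - (-x2)) (2*a + 2 - (-x3))
  have h11 := H.bound 1 0 0 (-1) (x0 - (-1)) (2*a + 1 - x1) ((-x2) - 0) (2*a - (-x3))
  have h12 := H.bound 0 0 (-1) (-1) (2*a + 1 - x0) (2*a - 1 - x1) (2*a + 1 - (-x2)) d3
  clear H
  omega

lemma orthant_pnpp (a x0 x1 x2 x3 : ℤ) (ha : 2 ≤ a)
    (l0 : 0 ≤ x0) (u0 : x0 ≤ a + 1) (l1 : x1 ≤ 0) (u1 : -x1 ≤ a + 1)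
    (l2 : 0 ≤ x2) (u2 : x2 ≤ a + 1) (l3 : 0 ≤ x3) (u3 : x3 ≤ a + 1)
    (H : Far a x0 x1 x2 x3) : False := by
  obtain ⟨d0, _, _, _⟩ := exists_abs (x0 - a)
  obtain ⟨d1, _, _, _⟩ := exists_abs ((-x1) - a)
  obtain ⟨d2, _, _, _⟩ := exists_abs (x3 - a)
  obtain ⟨d3, _, _, _⟩ := exists_abs (x2 - 1)
  obtain ⟨d4, _, _, _⟩ := exists_abs (x3 - (a - 1))
  obtain ⟨d5, _, _, _⟩ := exists_abs (x0 - 1)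
  obtain ⟨d6, _, _, _⟩ := exists_abs ((-x1) - 1)
  obtain ⟨d7, _, _, _⟩ := exists_abs (x2 - a)
  obtain ⟨d8, _, _, _⟩ := exists_abs (x2 - 2)
  have hz := H.bound 0 0 0 0 x0 (-x1) x2 x3
  have h0 := H.bound (-1) 1 0 1 d0 d1 (a + 1 - x2) d2
  have h1 := H.bound (-1) 0 1 0 x0 (2*a - (-x1)) d3 (x3 - (-1))
  have h2 := H.bound (-1) 1 0 0 (2*a - x0) ((-x1) - 0) d3 (x3 - (-1))
  have h3 := H.bound (-1) 0 0 0 (a + 1 - x0) (a + 1 - (-x1)) (x2 - (-a)) d4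
  have h4 := H.bound 0 0 (-1) 1 d5 d6 (x2 - (-1)) (2*a + 1 - x3)
  have h5 := H.bound 0 0 0 1 (x0 - (-a)) d1 d7 (a + 1 - x3)
  have h6 := H.bound 0 1 (-1) 1 d0 ((-x1) - (-a)) d7 (a + 1 - x3)
  have h7 := H.bound (-1) 0 0 1 d5 (2*a + 1 - (-x1)) x2 (2*a - x3)
  have h8 := H.bound (-1) 1 (-1) 1 (2*a + 1 - x0) d6 x2 (2*a - x3)
  have h9 := H.bound (-2) 1 1 0 (2*a - x0) (2*a - (-x1)) d8 (x3 - (-2))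
  have h10 := H.bound 0 (-1) 0 0 (x0 - (-a + 1)) (a + 1 - (-x1)) (x2 - (-a - 1)) d2
  have h11 := H.bound 0 0 (-1) 0 (a + 1 - x0) ((-x1) - (-a + 1)) (x2 - (-a - 1)) d2
  have h12 := H.bound 0 1 (-1) 2 x0 ((-x1) - 0) (2*a - x2) (2*a + 2 - x3)
  have h13 := H.bound (-2) 1 0 1 (2*a + 1 - x0) (2*a + 1 - (-x1)) d3 (2*a - 1 - x3)
  clear H
  omega

lemma orthant_pnpn (a x0 x1 x2 x3 : ℤ) (ha : 2 ≤ a)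
    (l0 : 0 ≤ x0) (u0 : x0 ≤ a + 1) (l1 : x1 ≤ 0) (u1 : -x1 ≤ a + 1)
    (l2 : 0 ≤ x2) (u2 : x2 ≤ a + 1) (l3 : x3 ≤ 0) (u3 : -x3 ≤ a + 1)
    (H : Far a x0 x1 x2 x3) : False := by
  obtain ⟨d0, _, _, _⟩ := exists_abs (x0 - (a - 1))
  obtain ⟨d1, _, _, _⟩ := exists_abs ((-x1) - (a - 1))
  obtain ⟨d2, _, _, _⟩ := exists_abs (x2 - 1)
  obtain ⟨d3, _, _, _⟩ := exists_abs ((-x3) - 1)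
  obtain ⟨d4, _, _, _⟩ := exists_abs (x0 - a)
  obtain ⟨d5, _, _, _⟩ := exists_abs ((-x1) - a)
  obtain ⟨d6, _, _, _⟩ := exists_abs (x2 - 2)
  obtain ⟨d7, _, _, _⟩ := exists_abs ((-x3) - 2)
  have hz := H.bound 0 0 0 0 x0 (-x1) x2 (-x3)
  have h0 := H.bound (-1) 1 1 0 d0 d1 (a + 2 - x2) (a + 1 - (-x3))
  have h1 := H.bound (-1) 0 1 0 x0 (2*a - (-x1)) d2 d3
  have h2 := H.bound (-1) 1 0 0 (2*a - x0) ((-x1) - 0) d2 d3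
  have h3 := H.bound (-1) 0 1 (-1) d4 d5 (x2 - (-a + 1)) (a + 2 - (-x3))
  have h4 := H.bound (-1) 1 0 1 d4 d5 (a + 1 - x2) ((-x3) - (-a))
  have h5 := H.bound (-2) 1 1 0 (2*a - x0) (2*a - (-x1)) d6 d7
  have h6 := H.bound (-1) 0 0 0 (a + 1 - x0) (a + 1 - (-x1)) (x2 - (-a)) ((-x3) - (-a + 1))
  clear H
  omega

lemma orthant_pnnp (a x0 x1 x2 x3 : ℤ) (ha : 2 ≤ a)
    (l0 : 0 ≤ x0) (u0 : x0 ≤ a + 1) (l1 : x1 ≤ 0) (u1 : -x1 ≤ a + 1)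
    (l2 : x2 ≤ 0) (u2 : -x2 ≤ a + 1) (l3 : 0 ≤ x3) (u3 : x3 ≤ a + 1)
    (H : Far a x0 x1 x2 x3) : False := by
  obtain ⟨d0, _, _, _⟩ := exists_abs ((-x2) - a)
  obtain ⟨d1, _, _, _⟩ := exists_abs (x3 - (a - 1))
  obtain ⟨d2, _, _, _⟩ := exists_abs (x0 - 1)
  obtain ⟨d3, _, _, _⟩ := exists_abs ((-x1) - 1)
  obtain ⟨d4, _, _, _⟩ := exists_abs ((-x2) - 1)
  obtain ⟨d5, _, _, _⟩ := exists_abs (x3 - a)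
  obtain ⟨d6, _, _, _⟩ := exists_abs (x0 - a)
  obtain ⟨d7, _, _, _⟩ := exists_abs ((-x1) - a)
  obtain ⟨d8, _, _, _⟩ := exists_abs (x0 - 2)
  obtain ⟨d9, _, _, _⟩ := exists_abs ((-x1) - 2)
  have hz := H.bound 0 0 0 0 x0 (-x1) (-x2) x3
  have h0 := H.bound (-1) 0 0 0 (a + 1 - x0) (a + 1 - (-x1)) d0 d1
  have h1 := H.bound 0 0 (-1) 1 d2 d3 d4 (2*a + 1 - x3)
  have h2 := H.bound 0 (-1) 0 0 (x0 - (-a + 1)) (a + 1 - (-x1)) (a + 1 - (-x2)) d5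
  have h3 := H.bound 0 0 (-1) 0 (a + 1 - x0) ((-x1) - (-a + 1)) (a + 1 - (-x2)) d5
  have h4 := H.bound 0 (-1) 0 (-1) d2 d3 (2*a + 1 - (-x2)) (x3 - (-1))
  have h5 := H.bound (-1) 1 0 1 d6 d7 ((-x2) - (-a - 1)) d5
  have h6 := H.bound (-1) 0 0 1 d2 (2*a + 1 - (-x1)) ((-x2) - 0) (2*a - x3)
  have h7 := H.bound (-1) 1 (-1) 1 (2*a + 1 - x0) d3 ((-x2) - 0) (2*a - x3)
  have h8 := H.bound 1 (-1) (-1) 0 (x0 - (-a + 1)) ((-x1) - (-a + 1)) (a + 2 - (-x2)) (a + 1 - x3)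
  have h9 := H.bound 0 (-1) (-1) 0 d8 d9 (2*a + 2 - (-x2)) (2*a - x3)
  have h10 := H.bound 0 0 0 1 (x0 - (-a)) d7 ((-x2) - (-a)) (a + 1 - x3)
  have h11 := H.bound 0 1 (-1) 1 d6 ((-x1) - (-a)) ((-x2) - (-a)) (a + 1 - x3)
  clear H
  omega

lemma orthant_pnnn (a x0 x1 x2 x3 : ℤ) (ha : 2 ≤ a)
    (l0 : 0 ≤ x0) (u0 : x0 ≤ a + 1) (l1 : x1 ≤ 0) (u1 : -x1 ≤ a + 1)
    (l2 : x2 ≤ 0) (u2 : -x2 ≤ a + 1) (l3 : x3 ≤ 0) (u3 : -x3 ≤ a + 1)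
    (H : Far a x0 x1 x2 x3) : False := by
  obtain ⟨d0, _, _, _⟩ := exists_abs (x0 - a)
  obtain ⟨d1, _, _, _⟩ := exists_abs ((-x1) - a)
  obtain ⟨d2, _, _, _⟩ := exists_abs ((-x2) - (a - 1))
  obtain ⟨d3, _, _, _⟩ := exists_abs (x0 - 1)
  obtain ⟨d4, _, _, _⟩ := exists_abs ((-x1) - 1)
  obtain ⟨d5, _, _, _⟩ := exists_abs ((-x3) - 1)
  obtain ⟨d6, _, _, _⟩ := exists_abs ((-x2) - a)
  obtain ⟨d7, _, _, _⟩ := exists_abs ((-x3) - 2)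
  obtain ⟨d8, _, _, _⟩ := exists_abs ((-x3) - a)
  obtain ⟨d9, _, _, _⟩ := exists_abs ((-x3) - 3)
  have hz := H.bound 0 0 0 0 x0 (-x1) (-x2) (-x3)
  have h0 := H.bound (-1) 0 1 (-1) d0 d1 d2 (a + 2 - (-x3))
  have h1 := H.bound 0 (-1) 0 (-1) d3 d4 (2*a + 1 - (-x2)) d5
  have h2 := H.bound (-1) 0 0 0 (a + 1 - x0) (a + 1 - (-x1)) d6 ((-x3) - (-a + 1))
  have h3 := H.bound (-1) 0 1 0 x0 (2*a - (-x1)) ((-x2) - (-1)) d5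
  have h4 := H.bound (-1) 1 0 0 (2*a - x0) ((-x1) - 0) ((-x2) - (-1)) d5
  have h5 := H.bound 0 (-1) 1 (-1) (x0 - (-a)) d1 d6 (a + 1 - (-x3))
  have h6 := H.bound 0 0 0 (-1) d0 ((-x1) - (-a)) d6 (a + 1 - (-x3))
  have h7 := H.bound (-1) (-1) 1 (-1) d3 (2*a + 1 - (-x1)) (2*a - (-x2)) d7
  have h8 := H.bound (-1) 0 0 (-1) (2*a + 1 - x0) d4 (2*a - (-x2)) d7
  have h9 := H.bound 0 (-1) 0 0 (x0 - (-a + 1)) (a + 1 - (-x1)) (a + 1 - (-x2)) ((-x3) - (-a))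
  have h10 := H.bound 0 0 (-1) 0 (a + 1 - x0) ((-x1) - (-a + 1)) (a + 1 - (-x2)) ((-x3) - (-a))
  have h11 := H.bound (-2) 1 1 0 (2*a - x0) (2*a - (-x1)) ((-x2) - (-2)) d7
  have h12 := H.bound 0 (-1) 1 (-2) x0 ((-x1) - 0) (2*a - (-x2)) (2*a + 2 - (-x3))
  have h13 := H.bound 1 (-1) 0 (-1) (x0 - (-a)) ((-x1) - (-a)) (a + 1 - (-x2)) d8
  have h14 := H.bound (-2) 0 1 (-1) (2*a + 1 - x0) (2*a + 1 - (-x1)) (2*a - 1 - (-x2)) d9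
  clear H
  omega

/-- The lattice is symmetric, so being far from it is invariant under negation. -/
lemma Far.neg {a x0 x1 x2 x3 : ℤ} (H : Far a x0 x1 x2 x3) : Far a (-x0) (-x1) (-x2) (-x3) := by
  intro c1 c2 c3 c4 e0 e1 e2 e3 h0 h1 h2 h3
  apply H (-c1) (-c2) (-c3) (-c4) e0 e1 e2 e3
  · constructor <;> linarith [h0.1, h0.2]
  · constructor <;> linarith [h1.1, h1.2]
  · constructor <;> linarith [h2.1, h2.2]
  · constructor <;> linarith [h3.1, h3.2]

/-- All orthants with nonnegative first coordinate. -/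
lemma half_box (a x0 x1 x2 x3 : ℤ) (ha : 2 ≤ a) (l0 : 0 ≤ x0) (u0 : x0 ≤ a + 1)
    (b1 : -(a + 1) ≤ x1 ∧ x1 ≤ a + 1) (b2 : -(a + 1) ≤ x2 ∧ x2 ≤ a + 1)
    (b3 : -(a + 1) ≤ x3 ∧ x3 ≤ a + 1) (H : Far a x0 x1 x2 x3) : False := by
  rcases le_total 0 x1 with s1 | s1 <;> rcases le_total 0 x2 with s2 | s2 <;>
    rcases le_total 0 x3 with s3 | s3
  · exact orthant_pppp a x0 x1 x2 x3 ha l0 u0 s1 b1.2 s2 b2.2 s3 b3.2 H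
  · exact orthant_pppn a x0 x1 x2 x3 ha l0 u0 s1 b1.2 s2 b2.2 s3 (by omega) H
  · exact orthant_ppnp a x0 x1 x2 x3 ha l0 u0 s1 b1.2 s2 (by omega) s3 b3.2 H
  · exact orthant_ppnn a x0 x1 x2 x3 ha l0 u0 s1 b1.2 s2 (by omega) s3 (by omega) H
  · exact orthant_pnpp a x0 x1 x2 x3 ha l0 u0 s1 (by omega) s2 b2.2 s3 b3.2 H
  · exact orthant_pnpn a x0 x1 x2 x3 ha l0 u0 s1 (by omega) s2 b2.2 s3 (by omega) H
  · exact orthant_pnnp a x0 x1 x2 x3 ha l0 u0 s1 (by omega) s2 (by omega) s3 b3.2 H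
  · exact orthant_pnnn a x0 x1 x2 x3 ha l0 u0 s1 (by omega) s2 (by omega) s3 (by omega) H


/-- For even `k ≥ 4`, `a = k/2`, every point of `ℤ⁴` whose coordinates all have
absolute value at most `a + 1` is within `l¹`-distance `k` of the lattice `L`. -/
theorem lattice_box_covered_even (k a : ℤ) (hk : 4 ≤ k) (hke : Even k) (ha : a = k / 2)
    (v₁ v₂ v₃ v₄ : Fin 4 → ℤ)
    (hv₁ : v₁ = ![-a - 1, a + 1, a, -a + 1])
    (hv₂ : v₂ = ![a - 1, a + 1, a + 1, -a])
    (hv₃ : v₃ = ![-a - 1, -a + 1, a + 1, -a])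
    (hv₄ : v₄ = ![-a, -a, a, a + 1])
    (L : Submodule ℤ (Fin 4 → ℤ))
    (hL : L = Submodule.span ℤ {v₁, v₂, v₃, v₄}) :
    ∀ x : Fin 4 → ℤ, (∀ i : Fin 4, |x i| ≤ a + 1) →
      ∃ w ∈ L, |x 0 - w 0| + |x 1 - w 1| + |x 2 - w 2| + |x 3 - w 3| ≤ k := by
  intro x hx
  by_contra hcon
  push Not at hcon
  have hk2 : k = 2 * a := by
    obtain ⟨r, hr⟩ := hke
    omega
  have H : Far a (x 0) (x 1) (x 2) (x 3) := by
    intro c1 c2 c3 c4 e0 e1 e2 e3 h0 h1 h2 h3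
    have hm : c1 • v₁ + c2 • v₂ + c3 • v₃ + c4 • v₄ ∈ L := by
      have hs : ∀ v ∈ ({v₁, v₂, v₃, v₄} : Set (Fin 4 → ℤ)), v ∈ L := by
        intro v hv
        rw [hL]
        exact Submodule.subset_span hv
      exact L.add_mem (L.add_mem (L.add_mem (L.smul_mem _ (hs _ (by simp)))
        (L.smul_mem _ (hs _ (by simp)))) (L.smul_mem _ (hs _ (by simp))))
        (L.smul_mem _ (hs _ (by simp)))
    have hd := hcon _ hm
    have t0 := abs_le.mpr h0
    have t1 := abs_le.mpr h1
    have t2 := abs_le.mpr h2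
    have t3 := abs_le.mpr h3
    have g0 : (c1 • v₁ + c2 • v₂ + c3 • v₃ + c4 • v₄) 0 =
        c1 * (-a - 1) + c2 * (a - 1) + c3 * (-a - 1) + c4 * (-a) := by
      simp [hv₁, hv₂, hv₃, hv₄]
    have g1 : (c1 • v₁ + c2 • v₂ + c3 • v₃ + c4 • v₄) 1 =
        c1 * (a + 1) + c2 * (a + 1) + c3 * (-a + 1) + c4 * (-a) := by
      simp [hv₁, hv₂, hv₃, hv₄]
    have g2 : (c1 • v₁ + c2 • v₂ + c3 • v₃ + c4 • v₄) 2 =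
        c1 * a + c2 * (a + 1) + c3 * (a + 1) + c4 * a := by
      simp [hv₁, hv₂, hv₃, hv₄]
    have g3 : (c1 • v₁ + c2 • v₂ + c3 • v₃ + c4 • v₄) 3 =
        c1 * (-a + 1) + c2 * (-a) + c3 * (-a) + c4 * (a + 1) := by
      simp [hv₁, hv₂, hv₃, hv₄]
    rw [g0, g1, g2, g3] at hd
    linarith
  have b0 := abs_le.mp (hx 0)
  have b1 := abs_le.mp (hx 1)
  have b2 := abs_le.mp (hx 2)
  have b3 := abs_le.mp (hx 3)
  rcases le_total 0 (x 0) with s | s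
  · exact half_box a _ _ _ _ (by omega) s b0.2 b1 b2 b3 H
  · exact half_box a _ _ _ _ (by omega) (by omega) (by omega) (by omega) (by omega) (by omega) H.neg
end

section
/- Let k ≥ 5 be odd, a = (k+1)/2, and let L ⊆ ℤ⁴ be the ℤ-span of v₁ = (-a+1, a+1, -a+1, a), v₂ = (a+1, a+1, -a+2, a-1), v₃ = (-a-1, a-1, a-1, -a), v₄ = (-a, a, a, a-1). Then for every x ∈ ℤ⁴ all of whose coordinates have absolute value at most a + 1, there exists w ∈ L with ‖x - w‖₁ ≤ k, where ‖y‖₁ = |y₁| + |y₂| + |y₃| + |y₄|. -/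
/-! Covering the box by `l¹` balls centred at lattice points

Write `k = 2 * a - 1`.  Suppose a point of the box is at distance at least `2 * a` from every lattice
vector `p v₁ + q v₂ + r v₃ + s v₄`.  Applying this to the origin puts the point deep inside some
orthant.  Inside that orthant we keep naming further nearby lattice vectors (their coefficients are
the four numerals after `H` below).  Each one gives one more linear inequality for every possible
sign pattern of the difference; linear arithmetic over the integers discards the impossible
patterns immediately, and whatever survives is treated with the next vector.  All the vectors used
have coefficients between `-2` and `2`, and the order in which they are tried was found by a
computer search minimising the number of surviving patterns.  The argument is uniform in `a ≥ 3`.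
-/

/-- `Far y₀ y₁ y₂ y₃ m` says that the `l¹` norm of `y` is at least `m`, split by the orthant of `y`. -/
inductive Far_s17 (y₀ y₁ y₂ y₃ m : ℤ) : Prop
  | pppp : 0 ≤ y₀ → 0 ≤ y₁ → 0 ≤ y₂ → 0 ≤ y₃ → m ≤ y₀ + y₁ + y₂ + y₃ → Far_s17 y₀ y₁ y₂ y₃ m
  | pppn : 0 ≤ y₀ → 0 ≤ y₁ → 0 ≤ y₂ → y₃ < 0 → m ≤ y₀ + y₁ + y₂ - y₃ → Far_s17 y₀ y₁ y₂ y₃ m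
  | ppnp : 0 ≤ y₀ → 0 ≤ y₁ → y₂ < 0 → 0 ≤ y₃ → m ≤ y₀ + y₁ - y₂ + y₃ → Far_s17 y₀ y₁ y₂ y₃ m
  | ppnn : 0 ≤ y₀ → 0 ≤ y₁ → y₂ < 0 → y₃ < 0 → m ≤ y₀ + y₁ - y₂ - y₃ → Far_s17 y₀ y₁ y₂ y₃ m
  | pnpp : 0 ≤ y₀ → y₁ < 0 → 0 ≤ y₂ → 0 ≤ y₃ → m ≤ y₀ - y₁ + y₂ + y₃ → Far_s17 y₀ y₁ y₂ y₃ m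
  | pnpn : 0 ≤ y₀ → y₁ < 0 → 0 ≤ y₂ → y₃ < 0 → m ≤ y₀ - y₁ + y₂ - y₃ → Far_s17 y₀ y₁ y₂ y₃ m
  | pnnp : 0 ≤ y₀ → y₁ < 0 → y₂ < 0 → 0 ≤ y₃ → m ≤ y₀ - y₁ - y₂ + y₃ → Far_s17 y₀ y₁ y₂ y₃ m
  | pnnn : 0 ≤ y₀ → y₁ < 0 → y₂ < 0 → y₃ < 0 → m ≤ y₀ - y₁ - y₂ - y₃ → Far_s17 y₀ y₁ y₂ y₃ m
  | nppp : y₀ < 0 → 0 ≤ y₁ → 0 ≤ y₂ → 0 ≤ y₃ → m ≤ -y₀ + y₁ + y₂ + y₃ → Far_s17 y₀ y₁ y₂ y₃ m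
  | nppn : y₀ < 0 → 0 ≤ y₁ → 0 ≤ y₂ → y₃ < 0 → m ≤ -y₀ + y₁ + y₂ - y₃ → Far_s17 y₀ y₁ y₂ y₃ m
  | npnp : y₀ < 0 → 0 ≤ y₁ → y₂ < 0 → 0 ≤ y₃ → m ≤ -y₀ + y₁ - y₂ + y₃ → Far_s17 y₀ y₁ y₂ y₃ m
  | npnn : y₀ < 0 → 0 ≤ y₁ → y₂ < 0 → y₃ < 0 → m ≤ -y₀ + y₁ - y₂ - y₃ → Far_s17 y₀ y₁ y₂ y₃ m
  | nnpp : y₀ < 0 → y₁ < 0 → 0 ≤ y₂ → 0 ≤ y₃ → m ≤ -y₀ - y₁ + y₂ + y₃ → Far_s17 y₀ y₁ y₂ y₃ m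
  | nnpn : y₀ < 0 → y₁ < 0 → 0 ≤ y₂ → y₃ < 0 → m ≤ -y₀ - y₁ + y₂ - y₃ → Far_s17 y₀ y₁ y₂ y₃ m
  | nnnp : y₀ < 0 → y₁ < 0 → y₂ < 0 → 0 ≤ y₃ → m ≤ -y₀ - y₁ - y₂ + y₃ → Far_s17 y₀ y₁ y₂ y₃ m
  | nnnn : y₀ < 0 → y₁ < 0 → y₂ < 0 → y₃ < 0 → m ≤ -y₀ - y₁ - y₂ - y₃ → Far_s17 y₀ y₁ y₂ y₃ m

theorem far_of_norm (y₀ y₁ y₂ y₃ m : ℤ) (h : m ≤ |y₀| + |y₁| + |y₂| + |y₃|) :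
    Far_s17 y₀ y₁ y₂ y₃ m := by
  rcases le_or_gt 0 y₀ with h₀ | h₀ <;> rcases le_or_gt 0 y₁ with h₁ | h₁ <;>
  rcases le_or_gt 0 y₂ with h₂ | h₂ <;> rcases le_or_gt 0 y₃ with h₃ | h₃ <;>
  grind [Far_s17]

/-- The half box `0 ≤ x ≤ a + 1`, `-(a + 1) ≤ y, z, t ≤ a + 1`, for a parameter `a ≥ 3` (that is
`k ≥ 5`).  The other half is reduced to this one by the central symmetry `v ↦ -v` of `L`. -/
structure InBox_s17 (a x y z t : ℤ) : Prop where
  param : 3 ≤ a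
  front : 0 ≤ x ∧ x ≤ a + 1
  side : -(a + 1) ≤ y ∧ y ≤ a + 1
  depth : -(a + 1) ≤ z ∧ z ≤ a + 1
  time : -(a + 1) ≤ t ∧ t ≤ a + 1

/-- No lattice point is at distance less than `2 * a` from `(x, y, z, t)`. -/
def AllFar (a x y z t : ℤ) : Prop := ∀ p q r s : ℤ,
  Far_s17 (x - (p * (-a + 1) + q * (a + 1) + r * (-a - 1) + s * -a))
    (y - (p * (a + 1) + q * (a + 1) + r * (a - 1) + s * a))
    (z - (p * (-a + 1) + q * (-a + 2) + r * (a - 1) + s * a))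
    (t - (p * a + q * (a - 1) + r * -a + s * (a - 1))) (2 * a)

set_option maxHeartbeats 4000000 in
theorem orthant_pppp_s17 {a x y z t : ℤ} (B : InBox_s17 a x y z t) (H : AllFar a x y z t)
    (h0 : 0 ≤ x) (h1 : 0 ≤ y) (h2 : 0 ≤ z) (h3 : 0 ≤ t) (hs : 2 * a ≤ x + y + z + t) : False := by
  cases B
  cases H (-1) (-1) (-1) 1 <;> try omega
  · cases H (-1) 0 (-1) 2 <;> try omega
    · cases H (-1) 1 0 1 <;> try omega
      · cases H (-1) 0 (-2) 2 <;> try omega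
        cases H (-1) 1 (-1) 1 <;> try omega
      cases H 0 0 (-1) 2 <;> try omega
      cases H 0 1 0 1 <;> try omega
    cases H (-1) 1 0 1 <;> try omega
    · cases H (-2) 1 (-1) 2 <;> try omega
    cases H (-1) 1 0 2 <;> try omega
  cases H (-1) 1 0 0 <;> try omega
  · cases H 0 1 1 0 <;> try omega
    cases H (-1) 1 0 1 <;> try omega
    · cases H 0 1 0 0 <;> try omega
      · cases H (-1) 1 (-1) 2 <;> try omega
      · cases H (-1) 1 (-1) 1 <;> try omega
      · cases H 0 1 0 1 <;> try omega
      cases H 0 0 (-1) 1 <;> try omega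
    · cases H 0 1 0 0 <;> try omega
    · cases H (-2) 1 (-1) 2 <;> try omega
    · cases H (-1) 0 (-1) 1 <;> try omega
      · cases H (-1) 1 (-1) 1 <;> try omega
      cases H 0 0 (-1) 1 <;> try omega
      · cases H (-1) 1 (-1) 1 <;> try omega
        cases H 0 1 0 0 <;> try omega
      cases H (-1) 1 (-1) 1 <;> try omega
      cases H 0 0 (-1) 0 <;> try omega
    · cases H (-1) 1 0 2 <;> try omega
    · cases H 0 0 0 1 <;> try omega
      · cases H 0 1 0 1 <;> try omega
      cases H 0 0 (-1) 1 <;> try omega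
      · cases H 0 1 0 1 <;> try omega
        cases H 0 1 0 0 <;> try omega
      cases H 0 1 0 1 <;> try omega
      cases H 1 0 0 0 <;> try omega
    · cases H (-1) 0 (-1) 2 <;> try omega
    cases H 0 0 (-1) 1 <;> try omega
    · cases H (-1) 0 (-1) 1 <;> try omega
    · cases H 0 0 0 1 <;> try omega
    cases H (-1) 0 (-1) 2 <;> try omega
  cases H 0 (-1) (-2) 1 <;> try omega
  · cases H 0 0 (-1) 1 <;> try omega
    · cases H 0 1 0 0 <;> try omega
    cases H 0 0 (-1) 0 <;> try omega
  cases H 1 0 0 0 <;> try omega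
  cases H 0 0 (-1) 1 <;> try omega

set_option maxHeartbeats 4000000 in
theorem orthant_pppn_s17 {a x y z t : ℤ} (B : InBox_s17 a x y z t) (H : AllFar a x y z t)
    (h0 : 0 ≤ x) (h1 : 0 ≤ y) (h2 : 0 ≤ z) (h3 : t < 0) (hs : 2 * a ≤ x + y + z - t) : False := by
  cases B
  cases H (-1) 1 1 0 <;> try omega
  · cases H (-1) 1 0 1 <;> try omega
    · cases H (-2) 2 1 1 <;> try omega
    cases H (-1) 2 1 0 <;> try omega
  · cases H 0 1 1 (-1) <;> try omega
    · cases H (-1) 1 0 1 <;> try omega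
      cases H (-1) 2 1 0 <;> try omega
      cases H 0 1 0 0 <;> try omega
      · cases H (-1) 1 0 0 <;> try omega
      cases H 0 1 1 0 <;> try omega
    · cases H (-1) 2 2 (-1) <;> try omega
    · cases H (-1) 1 0 0 <;> try omega
    cases H 0 1 1 0 <;> try omega
  · cases H (-2) 1 0 1 <;> try omega
    cases H (-1) 1 0 0 <;> try omega
    cases H (-1) 1 0 1 <;> try omega
    cases H (-1) 0 0 1 <;> try omega
  · cases H (-1) 1 0 0 <;> try omega
    cases H 0 1 1 (-1) <;> try omega
    cases H (-1) 1 1 (-1) <;> try omega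
  · cases H (-1) 1 1 1 <;> try omega
    cases H 0 1 1 0 <;> try omega
    cases H (-1) 1 0 1 <;> try omega
    cases H (-1) 0 0 1 <;> try omega
  · cases H 0 1 1 0 <;> try omega
    cases H 0 1 1 (-1) <;> try omega
    cases H 0 1 2 (-1) <;> try omega
  cases H (-1) 0 0 1 <;> try omega

set_option maxHeartbeats 4000000 in
theorem orthant_ppnp_s17 {a x y z t : ℤ} (B : InBox_s17 a x y z t) (H : AllFar a x y z t)
    (h0 : 0 ≤ x) (h1 : 0 ≤ y) (h2 : z < 0) (h3 : 0 ≤ t) (hs : 2 * a ≤ x + y - z + t) : False := by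
  cases B
  cases H 0 1 0 (-1) <;> try omega
  · cases H 0 0 (-1) 1 <;> try omega
    · cases H 1 1 1 (-1) <;> try omega
      cases H 0 1 0 0 <;> try omega
      · cases H 0 0 (-1) 0 <;> try omega
        cases H 1 0 (-1) 0 <;> try omega
      · cases H 1 0 0 0 <;> try omega
        cases H 1 0 (-1) 0 <;> try omega
      · cases H 1 0 0 (-1) <;> try omega
        cases H 1 0 (-1) 0 <;> try omega
        · cases H 0 0 (-1) 0 <;> try omega
        cases H 1 0 0 0 <;> try omega
      cases H 1 0 0 (-1) <;> try omega
      cases H 0 1 1 (-1) <;> try omega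
    cases H 1 0 0 0 <;> try omega
    · cases H 1 1 1 (-1) <;> try omega
    · cases H 1 0 (-1) 0 <;> try omega
      cases H 1 0 0 (-1) <;> try omega
      cases H 1 (-1) (-1) 0 <;> try omega
    cases H 1 0 0 (-1) <;> try omega
    cases H 1 0 1 (-1) <;> try omega
  cases H 1 0 0 (-1) <;> try omega
  · cases H 0 0 (-1) 0 <;> try omega
    · cases H 0 0 (-1) 1 <;> try omega
    cases H 1 0 (-1) 0 <;> try omega
    cases H 1 (-1) (-1) 0 <;> try omega
  · cases H 0 0 (-1) 0 <;> try omega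
    cases H 0 0 0 (-1) <;> try omega
  cases H 1 (-1) (-1) 0 <;> try omega

set_option maxHeartbeats 4000000 in
theorem orthant_ppnn_s17 {a x y z t : ℤ} (B : InBox_s17 a x y z t) (H : AllFar a x y z t)
    (h0 : 0 ≤ x) (h1 : 0 ≤ y) (h2 : z < 0) (h3 : t < 0) (hs : 2 * a ≤ x + y - z - t) : False := by
  cases B
  cases H 1 0 1 (-2) <;> try omega
  cases H (-1) 1 1 (-1) <;> try omega
  cases H 0 1 2 (-1) <;> try omega
  cases H 0 1 1 (-2) <;> try omega
  cases H 1 1 2 (-2) <;> try omega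
  cases H 0 1 1 (-1) <;> try omega
  · cases H 1 1 1 (-2) <;> try omega
  · cases H (-1) 1 0 0 <;> try omega
  · cases H 0 1 0 (-1) <;> try omega
    cases H 0 0 0 (-1) <;> try omega
  · cases H 0 1 1 0 <;> try omega
  · cases H 1 1 1 (-1) <;> try omega
    cases H 1 0 1 (-1) <;> try omega
  · cases H 0 0 1 (-1) <;> try omega
  cases H 1 0 0 (-1) <;> try omega
  · cases H 0 0 0 (-1) <;> try omega
  cases H 1 0 1 (-1) <;> try omega

set_option maxHeartbeats 4000000 in
theorem orthant_pnpp_s17 {a x y z t : ℤ} (B : InBox_s17 a x y z t) (H : AllFar a x y z t)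
    (h0 : 0 ≤ x) (h1 : y < 0) (h2 : 0 ≤ z) (h3 : 0 ≤ t) (hs : 2 * a ≤ x - y + z + t) : False := by
  cases B
  cases H (-1) 0 (-1) 0 <;> try omega
  cases H (-1) 0 (-1) 1 <;> try omega
  · cases H (-1) 0 (-2) 2 <;> try omega
  · cases H (-2) 1 0 1 <;> try omega
  · cases H 0 0 (-1) 0 <;> try omega
    · cases H (-1) 1 (-1) 1 <;> try omega
    cases H 0 0 (-1) 1 <;> try omega
  · cases H (-1) 1 0 0 <;> try omega
    cases H 0 0 (-1) 0 <;> try omega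
  · cases H (-1) 0 (-2) 1 <;> try omega
    cases H 0 0 (-1) 0 <;> try omega
    cases H 0 (-1) (-2) 1 <;> try omega
  · cases H (-1) 0 (-1) 2 <;> try omega
  · cases H (-1) 0 0 1 <;> try omega
  · cases H 0 (-1) (-1) 1 <;> try omega
    · cases H 0 0 (-1) 1 <;> try omega
    cases H 0 0 (-1) 0 <;> try omega
    · cases H 0 0 (-1) 1 <;> try omega
      cases H 1 (-1) (-1) 0 <;> try omega
    cases H 0 (-1) (-2) 1 <;> try omega
  · cases H (-1) (-1) (-2) 2 <;> try omega
  · cases H (-1) (-1) (-1) 1 <;> try omega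
  · cases H 0 (-1) (-2) 1 <;> try omega
    cases H 0 (-1) (-1) 1 <;> try omega
    cases H 0 (-1) (-1) 0 <;> try omega
  cases H 0 (-1) (-1) 0 <;> try omega
  cases H (-1) 0 0 0 <;> try omega

set_option maxHeartbeats 4000000 in
theorem orthant_pnpn_s17 {a x y z t : ℤ} (B : InBox_s17 a x y z t) (H : AllFar a x y z t)
    (h0 : 0 ≤ x) (h1 : y < 0) (h2 : 0 ≤ z) (h3 : t < 0) (hs : 2 * a ≤ x - y + z - t) : False := by
  cases B
  cases H (-1) 0 0 0 <;> try omega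
  · cases H (-2) 1 0 1 <;> try omega
    · cases H (-1) 0 0 1 <;> try omega
      cases H (-1) 1 0 0 <;> try omega
      cases H (-1) 0 (-1) 1 <;> try omega
    cases H (-1) 0 (-1) 1 <;> try omega
    · cases H (-1) 1 0 0 <;> try omega
    · cases H (-2) 0 (-1) 1 <;> try omega
    cases H (-1) 0 0 1 <;> try omega
  · cases H (-1) 1 1 0 <;> try omega
    · cases H (-2) 1 1 0 <;> try omega
    cases H (-1) 1 1 (-1) <;> try omega
  · cases H (-1) 0 (-1) 0 <;> try omega
    cases H 0 0 0 (-1) <;> try omega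
    · cases H (-1) 1 0 0 <;> try omega
    cases H (-1) 1 1 (-1) <;> try omega
  · cases H (-1) 1 1 (-1) <;> try omega
  · cases H (-1) 0 0 1 <;> try omega
  · cases H (-1) 1 1 0 <;> try omega
    · cases H (-1) 0 1 0 <;> try omega
    cases H 0 0 1 (-1) <;> try omega
  cases H 0 0 1 (-1) <;> try omega

set_option maxHeartbeats 4000000 in
theorem orthant_pnnp_s17 {a x y z t : ℤ} (B : InBox_s17 a x y z t) (H : AllFar a x y z t)
    (h0 : 0 ≤ x) (h1 : y < 0) (h2 : z < 0) (h3 : 0 ≤ t) (hs : 2 * a ≤ x - y - z + t) : False := by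
  cases B
  cases H (-1) 0 (-1) 0 <;> try omega
  cases H 0 1 0 (-1) <;> try omega
  cases H 0 (-1) (-2) 1 <;> try omega
  · cases H 0 0 (-1) 1 <;> try omega
    cases H 1 0 0 (-1) <;> try omega
    · cases H 0 0 (-1) 0 <;> try omega
      · cases H 0 0 (-1) (-1) <;> try omega
      · cases H 1 (-1) (-1) 0 <;> try omega
        cases H 1 0 (-1) 0 <;> try omega
      · cases H 0 (-1) (-1) 0 <;> try omega
      · cases H 1 (-1) (-2) 0 <;> try omega
        cases H 1 (-1) (-1) (-1) <;> try omega
        cases H 1 (-1) (-1) 0 <;> try omega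
      cases H 1 (-1) (-1) (-1) <;> try omega
      cases H 0 0 0 (-1) <;> try omega
    cases H 0 0 0 (-1) <;> try omega
    · cases H 0 0 (-1) 0 <;> try omega
    · cases H 0 (-1) (-1) 0 <;> try omega
    cases H 1 (-1) (-1) (-1) <;> try omega
  cases H 1 (-1) (-1) 0 <;> try omega
  · cases H 1 0 0 (-1) <;> try omega
    cases H 1 (-1) 0 (-1) <;> try omega
  · cases H 0 (-1) (-1) 0 <;> try omega
    cases H 0 0 0 (-1) <;> try omega
  cases H 1 (-1) (-1) (-1) <;> try omega
  cases H 1 (-1) 0 (-1) <;> try omega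

set_option maxHeartbeats 4000000 in
theorem orthant_pnnn_s17 {a x y z t : ℤ} (B : InBox_s17 a x y z t) (H : AllFar a x y z t)
    (h0 : 0 ≤ x) (h1 : y < 0) (h2 : z < 0) (h3 : t < 0) (hs : 2 * a ≤ x - y - z - t) : False := by
  cases B
  cases H 1 0 1 (-2) <;> try omega
  cases H 0 0 0 (-1) <;> try omega
  · cases H (-1) 1 0 0 <;> try omega
  · cases H (-1) 1 1 (-1) <;> try omega
  · cases H 0 1 1 (-2) <;> try omega
  · cases H (-1) 0 0 (-1) <;> try omega
  · cases H 0 0 1 (-1) <;> try omega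
  · cases H 1 0 0 (-1) <;> try omega
    cases H 1 (-1) 0 (-1) <;> try omega
  · cases H 0 (-1) (-1) 0 <;> try omega
  · cases H 0 (-1) 0 (-1) <;> try omega
    cases H (-1) 0 0 0 <;> try omega
  · cases H 1 (-1) 0 (-1) <;> try omega
  cases H 0 0 1 (-2) <;> try omega
  cases H 1 (-1) 0 (-2) <;> try omega

theorem core_s17 {a x y z t : ℤ} (B : InBox_s17 a x y z t) (H : AllFar a x y z t) : False := by
  have h := H 0 0 0 0
  simp only [zero_mul, add_zero, sub_zero] at h
  cases h
  · apply orthant_pppp_s17 B H <;> assumption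
  · apply orthant_pppn_s17 B H <;> assumption
  · apply orthant_ppnp_s17 B H <;> assumption
  · apply orthant_ppnn_s17 B H <;> assumption
  · apply orthant_pnpp_s17 B H <;> assumption
  · apply orthant_pnpn_s17 B H <;> assumption
  · apply orthant_pnnp_s17 B H <;> assumption
  · apply orthant_pnnn_s17 B H <;> assumption
  all_goals exact absurd B.front.1 (by omega)

/-- For odd `k ≥ 5`, `a = (k+1)/2`, every point of `ℤ⁴` whose coordinates all have
absolute value at most `a + 1` is within `l¹`-distance `k` of the lattice `L`. -/
theorem lattice_box_covered_odd (k a : ℤ) (hk : 5 ≤ k) (hko : Odd k) (ha : a = (k + 1) / 2)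
    (v₁ v₂ v₃ v₄ : Fin 4 → ℤ)
    (hv₁ : v₁ = ![-a + 1, a + 1, -a + 1, a])
    (hv₂ : v₂ = ![a + 1, a + 1, -a + 2, a - 1])
    (hv₃ : v₃ = ![-a - 1, a - 1, a - 1, -a])
    (hv₄ : v₄ = ![-a, a, a, a - 1])
    (L : Submodule ℤ (Fin 4 → ℤ))
    (hL : L = Submodule.span ℤ {v₁, v₂, v₃, v₄}) :
    ∀ x : Fin 4 → ℤ, (∀ i : Fin 4, |x i| ≤ a + 1) →
      ∃ w ∈ L, |x 0 - w 0| + |x 1 - w 1| + |x 2 - w 2| + |x 3 - w 3| ≤ k := by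
  subst hL
  have hk2 : k = 2 * a - 1 := by
    obtain ⟨m, hm⟩ := hko
    omega
  have ha3 : 3 ≤ a := by omega
  intro x hx
  by_contra! hcon
  have e : ∀ p q r s : ℤ, 2 * a ≤
      |x 0 - (p * (-a + 1) + q * (a + 1) + r * (-a - 1) + s * -a)| +
      |x 1 - (p * (a + 1) + q * (a + 1) + r * (a - 1) + s * a)| +
      |x 2 - (p * (-a + 1) + q * (-a + 2) + r * (a - 1) + s * a)| +
      |x 3 - (p * a + q * (a - 1) + r * -a + s * (a - 1))| := by
    intro p q r s
    have hmem : p • v₁ + q • v₂ + r • v₃ + s • v₄ ∈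
        Submodule.span ℤ {v₁, v₂, v₃, v₄} := by
      refine add_mem (add_mem (add_mem ?_ ?_) ?_) ?_ <;>
        exact Submodule.smul_mem _ _ (Submodule.subset_span (by simp))
    have h := hcon _ hmem
    simp only [hv₁, hv₂, hv₃, hv₄, Pi.add_apply, Pi.smul_apply, smul_eq_mul] at h
    simp at h
    simp only [neg_add_eq_sub] at h ⊢
    rw [hk2] at h
    simp only [mul_neg]
    linarith
  have b0 := abs_le.mp (hx 0)
  have b1 := abs_le.mp (hx 1)
  have b2 := abs_le.mp (hx 2)
  have b3 := abs_le.mp (hx 3)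
  rcases le_total 0 (x 0) with h0 | h0
  · exact core_s17 ⟨ha3, ⟨h0, b0.2⟩, b1, b2, b3⟩
      fun p q r s => far_of_norm _ _ _ _ _ (e p q r s)
  · refine core_s17 (x := -x 0) (y := -x 1) (z := -x 2) (t := -x 3)
      (by constructor <;> omega)
      fun p q r s => far_of_norm _ _ _ _ _ ?_
    have h := e (-p) (-q) (-r) (-s)
    rw [← abs_neg (x 0 - _), ← abs_neg (x 1 - _), ← abs_neg (x 2 - _), ← abs_neg (x 3 - _)] at h
    convert h using 5 <;> ring
end

section
/- Let k ≥ 4 be even, a = k/2, and let L ⊆ ℤ⁴ be the ℤ-span of v₁ = (-a-1, a+1, a, -a+1), v₂ = (a-1, a+1, a+1, -a), v₃ = (-a-1, -a+1, a+1, -a), v₄ = (-a, -a, a, a+1). Then for every x = (-r, s, t, -u) ∈ ℤ⁴ with 0 ≤ r ≤ a+1, 0 ≤ s ≤ a+1, 0 ≤ t ≤ a+1, 0 ≤ u ≤ a+1 (the orthant of v₁, with coordinates bounded by a+1), there exists w ∈ L with ‖x - w‖₁ ≤ k, where ‖y‖₁ = |y₁| + |y₂| + |y₃| + |y₄|. 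-/
/-- Case split on the sign of the argument of an absolute value, closing impossible branches. -/
theorem abs_split (z : ℤ) : (0 ≤ z ∧ |z| = z) ∨ (z < 0 ∧ |z| = -z) := by
  rcases le_or_gt 0 z with h | h
  · exact Or.inl ⟨h, abs_of_nonneg h⟩
  · exact Or.inr ⟨h, abs_of_neg h⟩

set_option maxHeartbeats 4000000 in
/-- Orthant of `v₁`, `k ≡ 0 (mod 2)`: for even `k ≥ 4`, `a = k/2`, every point
`x = (-r, s, t, -u)` with `0 ≤ r, s, t, u ≤ a + 1` is within `l¹`-distance `k`
of the lattice `L`. -/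
theorem lattice_orthant_v₁_even (k a : ℤ) (hk : 4 ≤ k) (hke : Even k) (ha : a = k / 2)
    (v₁ v₂ v₃ v₄ : Fin 4 → ℤ)
    (hv₁ : v₁ = ![-a - 1, a + 1, a, -a + 1])
    (hv₂ : v₂ = ![a - 1, a + 1, a + 1, -a])
    (hv₃ : v₃ = ![-a - 1, -a + 1, a + 1, -a])
    (hv₄ : v₄ = ![-a, -a, a, a + 1])
    (L : Submodule ℤ (Fin 4 → ℤ))
    (hL : L = Submodule.span ℤ {v₁, v₂, v₃, v₄}) :
    ∀ r s t u : ℤ, 0 ≤ r → r ≤ a + 1 → 0 ≤ s → s ≤ a + 1 →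
      0 ≤ t → t ≤ a + 1 → 0 ≤ u → u ≤ a + 1 →
      ∀ x : Fin 4 → ℤ, x = ![-r, s, t, -u] →
      ∃ w ∈ L, |x 0 - w 0| + |x 1 - w 1| + |x 2 - w 2| + |x 3 - w 3| ≤ k := by
  
  intro r s t u hr hr' hs hs' ht ht' hu hu' x hx
  have hka : k = 2 * a := by obtain ⟨m, hm⟩ := hke; omega
  have ha2 : 2 ≤ a := by omega
  by_contra hcon
  have key : ∀ c₁ c₂ c₃ c₄ : ℤ, 2 * a <
      |-r - (c₁ * (-a - 1) + c₂ * (a - 1) + c₃ * (-a - 1) + c₄ * (-a))| +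
      |s - (c₁ * (a + 1) + c₂ * (a + 1) + c₃ * (-a + 1) + c₄ * (-a))| +
      |t - (c₁ * a + c₂ * (a + 1) + c₃ * (a + 1) + c₄ * a)| +
      |-u - (c₁ * (-a + 1) + c₂ * (-a) + c₃ * (-a) + c₄ * (a + 1))| := by
    intro c₁ c₂ c₃ c₄
    by_contra hle
    apply hcon
    refine ⟨c₁ • v₁ + c₂ • v₂ + c₃ • v₃ + c₄ • v₄, ?_, ?_⟩
    · rw [hL]
      refine Submodule.add_mem _ (Submodule.add_mem _ (Submodule.add_mem _ ?_ ?_) ?_) ?_ <;>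
        exact Submodule.smul_mem _ _ (Submodule.subset_span (by simp))
    · rw [hx, hka]
      have := not_lt.mp hle
      simpa [hv₁, hv₂, hv₃, hv₄] using this
  clear hcon hL hv₁ hv₂ hv₃ hv₄ hx hke ha
  have split : ∀ p q m n : ℤ, 2 * a < |p| + |q| + |m| + |n| →
      ∃ p' q' m' n' : ℤ, 2 * a < p' + q' + m' + n' ∧
        (0 ≤ p ∧ p' = p ∨ p < 0 ∧ p' = -p) ∧ (0 ≤ q ∧ q' = q ∨ q < 0 ∧ q' = -q) ∧
        (0 ≤ m ∧ m' = m ∨ m < 0 ∧ m' = -m) ∧ (0 ≤ n ∧ n' = n ∨ n < 0 ∧ n' = -n) :=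
    fun p q m n h => ⟨_, _, _, _, h, abs_split p, abs_split q, abs_split m, abs_split n⟩
  have h0 : 2 * a < r + s + t + u := by
    obtain ⟨p, q, m, n, hd, hp, hq, hm, hn⟩ := split _ _ _ _ (key 0 0 0 0)
    omega
  have h1 : (t = a + 1 ∧ u < a ∧ r + s + u ≤ a + 1) ∨
      (t ≤ a ∧ a ≤ u ∧ r + s + t ≤ u + 2) ∨
      (t = a + 1 ∧ a ≤ u ∧ r + s + a ≤ u + 3) := by
    obtain ⟨p, q, m, n, hd, hp, hq, hm, hn⟩ := split _ _ _ _ (key 1 0 0 0)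
    omega
  rcases h1 with h1 | h1 | h1
  all_goals
    obtain ⟨p, q, m, n, hd, hp, hq, hm, hn⟩ := split _ _ _ _ (key (-1) 1 1 0)
    rcases hp with ⟨_, rfl⟩ | ⟨_, rfl⟩ <;> (try omega) <;>
    rcases hq with ⟨_, rfl⟩ | ⟨_, rfl⟩ <;> (try omega) <;>
    rcases hm with ⟨_, rfl⟩ | ⟨_, rfl⟩ <;> (try omega) <;>
    rcases hn with ⟨_, rfl⟩ | ⟨_, rfl⟩ <;> (try omega)
  all_goals
    obtain ⟨p, q, m, n, hd, hp, hq, hm, hn⟩ := split _ _ _ _ (key 0 0 1 (-1))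
    rcases hp with ⟨_, rfl⟩ | ⟨_, rfl⟩ <;> (try omega) <;>
    rcases hq with ⟨_, rfl⟩ | ⟨_, rfl⟩ <;> (try omega) <;>
    rcases hm with ⟨_, rfl⟩ | ⟨_, rfl⟩ <;> (try omega) <;>
    rcases hn with ⟨_, rfl⟩ | ⟨_, rfl⟩ <;> (try omega)
  all_goals
    obtain ⟨p, q, m, n, hd, hp, hq, hm, hn⟩ := split _ _ _ _ (key 0 1 0 0)
    rcases hp with ⟨_, rfl⟩ | ⟨_, rfl⟩ <;> (try omega) <;>
    rcases hq with ⟨_, rfl⟩ | ⟨_, rfl⟩ <;> (try omega) <;>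
    rcases hm with ⟨_, rfl⟩ | ⟨_, rfl⟩ <;> (try omega) <;>
    rcases hn with ⟨_, rfl⟩ | ⟨_, rfl⟩ <;> (try omega)
  all_goals
    obtain ⟨p, q, m, n, hd, hp, hq, hm, hn⟩ := split _ _ _ _ (key 0 1 1 0)
    rcases hp with ⟨_, rfl⟩ | ⟨_, rfl⟩ <;> (try omega) <;>
    rcases hq with ⟨_, rfl⟩ | ⟨_, rfl⟩ <;> (try omega) <;>
    rcases hm with ⟨_, rfl⟩ | ⟨_, rfl⟩ <;> (try omega) <;>
    rcases hn with ⟨_, rfl⟩ | ⟨_, rfl⟩ <;> (try omega)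
  all_goals
    obtain ⟨p, q, m, n, hd, hp, hq, hm, hn⟩ := split _ _ _ _ (key 0 0 0 (-1))
    rcases hp with ⟨_, rfl⟩ | ⟨_, rfl⟩ <;> (try omega) <;>
    rcases hq with ⟨_, rfl⟩ | ⟨_, rfl⟩ <;> (try omega) <;>
    rcases hm with ⟨_, rfl⟩ | ⟨_, rfl⟩ <;> (try omega) <;>
    rcases hn with ⟨_, rfl⟩ | ⟨_, rfl⟩ <;> (try omega)
  all_goals
    obtain ⟨p, q, m, n, hd, hp, hq, hm, hn⟩ := split _ _ _ _ (key 0 (-1) 1 (-1))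
    rcases hp with ⟨_, rfl⟩ | ⟨_, rfl⟩ <;> (try omega) <;>
    rcases hq with ⟨_, rfl⟩ | ⟨_, rfl⟩ <;> (try omega) <;>
    rcases hm with ⟨_, rfl⟩ | ⟨_, rfl⟩ <;> (try omega) <;>
    rcases hn with ⟨_, rfl⟩ | ⟨_, rfl⟩ <;> (try omega)
  all_goals
    obtain ⟨p, q, m, n, hd, hp, hq, hm, hn⟩ := split _ _ _ _ (key 1 0 0 (-1))
    rcases hp with ⟨_, rfl⟩ | ⟨_, rfl⟩ <;> (try omega) <;>
    rcases hq with ⟨_, rfl⟩ | ⟨_, rfl⟩ <;> (try omega) <;>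
    rcases hm with ⟨_, rfl⟩ | ⟨_, rfl⟩ <;> (try omega) <;>
    rcases hn with ⟨_, rfl⟩ | ⟨_, rfl⟩ <;> (try omega)
  all_goals
    obtain ⟨p, q, m, n, hd, hp, hq, hm, hn⟩ := split _ _ _ _ (key 1 (-1) 0 (-1))
    rcases hp with ⟨_, rfl⟩ | ⟨_, rfl⟩ <;> (try omega) <;>
    rcases hq with ⟨_, rfl⟩ | ⟨_, rfl⟩ <;> (try omega) <;>
    rcases hm with ⟨_, rfl⟩ | ⟨_, rfl⟩ <;> (try omega) <;>
    rcases hn with ⟨_, rfl⟩ | ⟨_, rfl⟩ <;> (try omega)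
  all_goals
    obtain ⟨p, q, m, n, hd, hp, hq, hm, hn⟩ := split _ _ _ _ (key 0 0 1 0)
    rcases hp with ⟨_, rfl⟩ | ⟨_, rfl⟩ <;> (try omega) <;>
    rcases hq with ⟨_, rfl⟩ | ⟨_, rfl⟩ <;> (try omega) <;>
    rcases hm with ⟨_, rfl⟩ | ⟨_, rfl⟩ <;> (try omega) <;>
    rcases hn with ⟨_, rfl⟩ | ⟨_, rfl⟩ <;> (try omega)
  all_goals
    obtain ⟨p, q, m, n, hd, hp, hq, hm, hn⟩ := split _ _ _ _ (key 1 (-1) 1 (-1))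
    rcases hp with ⟨_, rfl⟩ | ⟨_, rfl⟩ <;> (try omega) <;>
    rcases hq with ⟨_, rfl⟩ | ⟨_, rfl⟩ <;> (try omega) <;>
    rcases hm with ⟨_, rfl⟩ | ⟨_, rfl⟩ <;> (try omega) <;>
    rcases hn with ⟨_, rfl⟩ | ⟨_, rfl⟩ <;> (try omega)
  all_goals
    obtain ⟨p, q, m, n, hd, hp, hq, hm, hn⟩ := split _ _ _ _ (key 0 1 0 1)
    rcases hp with ⟨_, rfl⟩ | ⟨_, rfl⟩ <;> (try omega) <;>
    rcases hq with ⟨_, rfl⟩ | ⟨_, rfl⟩ <;> (try omega) <;>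
    rcases hm with ⟨_, rfl⟩ | ⟨_, rfl⟩ <;> (try omega) <;>
    rcases hn with ⟨_, rfl⟩ | ⟨_, rfl⟩ <;> (try omega)
end

section
/- Let k ≥ 5 be odd, a = (k+1)/2, and let L ⊆ ℤ⁴ be the ℤ-span of v₁ = (-a+1, a+1, -a+1, a), v₂ = (a+1, a+1, -a+2, a-1), v₃ = (-a-1, a-1, a-1, -a), v₄ = (-a, a, a, a-1). Then for every x = (-r, -s, -t, u) ∈ ℤ⁴ with 0 ≤ r ≤ a+1, 0 ≤ s ≤ a+1, 0 ≤ t ≤ a+1, 0 ≤ u ≤ a+1 (the orthant of v₈ = v₁ - v₂ - v₃ = (-a+1, -a+1, -a, a+1), with coordinates bounded by a+1), there exists w ∈ L with ‖x - w‖₁ ≤ k, where ‖y‖₁ = |y₁| + |y₂| + |y₃| + |y₄|. -/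
set_option maxHeartbeats 4000000 in
/-- If `y` is at distance more than `k` from fifteen explicit points of the lattice, then it is
not in the box; this is the linear-arithmetic core. -/
theorem box_core (a r s t u : ℤ) (ha : 3 ≤ a) (hr : 0 ≤ r) (hr' : r ≤ a + 1) (hs : 0 ≤ s)
    (hs' : s ≤ a + 1) (ht : 0 ≤ t) (ht' : t ≤ a + 1) (hu : 0 ≤ u) (hu' : u ≤ a + 1)
    (h0 : 2 * a - 1 < |-r - (-1 * a + 1)| + |-s - (-1 * a + 1)| + |-t - (-1 * a + 0)| + |u - (1 * a + 1)|)
    (h1 : 2 * a - 1 < |-r - (0 * a + 0)| + |-s - (0 * a + 0)| + |-t - (0 * a + 0)| + |u - (0 * a + 0)|)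
    (h2 : 2 * a - 1 < |-r - (0 * a + 0)| + |-s - (-2 * a + 0)| + |-t - (0 * a + -1)| + |u - (0 * a + 1)|)
    (h3 : 2 * a - 1 < |-r - (-2 * a + 0)| + |-s - (0 * a + 0)| + |-t - (0 * a + -1)| + |u - (0 * a + 1)|)
    (h4 : 2 * a - 1 < |-r - (-1 * a + 0)| + |-s - (-1 * a + 0)| + |-t - (-1 * a + -1)| + |u - (-1 * a + 2)|)
    (h5 : 2 * a - 1 < |-r - (-1 * a + 0)| + |-s - (-1 * a + 0)| + |-t - (1 * a + -1)| + |u - (1 * a + 0)|)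
    (h6 : 2 * a - 1 < |-r - (0 * a + 1)| + |-s - (0 * a + 1)| + |-t - (-2 * a + 1)| + |u - (0 * a + 1)|)
    (h7 : 2 * a - 1 < |-r - (-1 * a + -1)| + |-s - (-1 * a + -1)| + |-t - (1 * a + -2)| + |u - (-1 * a + 1)|)
    (h8 : 2 * a - 1 < |-r - (-2 * a + 0)| + |-s - (-2 * a + 0)| + |-t - (0 * a + -2)| + |u - (0 * a + 2)|)
    (h9 : 2 * a - 1 < |-r - (0 * a + 1)| + |-s - (-2 * a + 1)| + |-t - (-2 * a + 0)| + |u - (0 * a + 2)|)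
    (h10 : 2 * a - 1 < |-r - (-2 * a + 1)| + |-s - (0 * a + 1)| + |-t - (-2 * a + 0)| + |u - (0 * a + 2)|)
    (h11 : 2 * a - 1 < |-r - (0 * a + 1)| + |-s - (-2 * a + 1)| + |-t - (0 * a + 0)| + |u - (2 * a + 0)|)
    (h12 : 2 * a - 1 < |-r - (-2 * a + 1)| + |-s - (0 * a + 1)| + |-t - (0 * a + 0)| + |u - (2 * a + 0)|)
    (h13 : 2 * a - 1 < |-r - (-2 * a + 1)| + |-s - (-2 * a + 1)| + |-t - (0 * a + -1)| + |u - (2 * a + 1)|)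
    (h14 : 2 * a - 1 < |-r - (-2 * a + 1)| + |-s - (-2 * a + 1)| + |-t - (-2 * a + -1)| + |u - (0 * a + 3)|) : False := by
  have R : (r ≤ a - 1 ∧ |-r - (-1 * a + 1)| = a - 1 - r ∧ |-r - (-1 * a + 0)| = a - r) ∨
      (r = a ∧ |-r - (-1 * a + 1)| = 1 ∧ |-r - (-1 * a + 0)| = 0) ∨
      (r = a + 1 ∧ |-r - (-1 * a + 1)| = 2 ∧ |-r - (-1 * a + 0)| = 1) := by
    clear * - ha hr hr'
    grind (splits := 30)
  have S : (s ≤ a - 1 ∧ |-s - (-1 * a + 1)| = a - 1 - s ∧ |-s - (-1 * a + 0)| = a - s) ∨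
      (s = a ∧ |-s - (-1 * a + 1)| = 1 ∧ |-s - (-1 * a + 0)| = 0) ∨
      (s = a + 1 ∧ |-s - (-1 * a + 1)| = 2 ∧ |-s - (-1 * a + 0)| = 1) := by
    clear * - ha hs hs'
    grind (splits := 30)
  have T : (t = 0 ∧ |-t - (-1 * a + 0)| = a ∧ |-t - (0 * a + -1)| = 1 ∧
        |-t - (0 * a + -2)| = 2) ∨
      (1 ≤ t ∧ t ≤ a ∧ |-t - (-1 * a + 0)| = a - t ∧ |-t - (0 * a + -1)| = t - 1 ∧
        (t = 1 ∧ |-t - (0 * a + -2)| = 1 ∨ |-t - (0 * a + -2)| = t - 2)) ∨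
      (t = a + 1 ∧ |-t - (-1 * a + 0)| = 1 ∧ |-t - (0 * a + -1)| = a ∧
        |-t - (0 * a + -2)| = a - 1) := by
    clear * - ha ht ht'
    grind (splits := 30)
  have U : (u = 0 ∧ |u - (1 * a + 0)| = a ∧ |u - (0 * a + 1)| = 1 ∧ |u - (0 * a + 2)| = 2 ∧
        |u - (0 * a + 3)| = 3) ∨
      (1 ≤ u ∧ u ≤ a ∧ |u - (1 * a + 0)| = a - u ∧ |u - (0 * a + 1)| = u - 1 ∧
        (u = 1 ∧ |u - (0 * a + 2)| = 1 ∧ |u - (0 * a + 3)| = 2 ∨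
         u = 2 ∧ |u - (0 * a + 2)| = 0 ∧ |u - (0 * a + 3)| = 1 ∨
         |u - (0 * a + 2)| = u - 2 ∧ |u - (0 * a + 3)| = u - 3)) ∨
      (u = a + 1 ∧ |u - (1 * a + 0)| = 1 ∧ |u - (0 * a + 1)| = a ∧ |u - (0 * a + 2)| = a - 1 ∧
        |u - (0 * a + 3)| = a - 2) := by
    clear * - ha hu hu'
    grind (splits := 30)
  have e0 := abs_of_nonpos (by omega : u - (1 * a + 1) ≤ 0)
  have e1 := abs_of_nonpos (by omega : -r - (0 * a + 0) ≤ 0)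
  have e2 := abs_of_nonpos (by omega : -s - (0 * a + 0) ≤ 0)
  have e3 := abs_of_nonpos (by omega : -t - (0 * a + 0) ≤ 0)
  have e4 := abs_of_nonneg (by omega : 0 ≤ u - (0 * a + 0))
  have e5 := abs_of_nonneg (by omega : 0 ≤ -s - (-2 * a + 0))
  have e6 := abs_of_nonneg (by omega : 0 ≤ -r - (-2 * a + 0))
  have e7 := abs_of_nonneg (by omega : 0 ≤ -t - (-1 * a + -1))
  have e8 := abs_of_nonneg (by omega : 0 ≤ u - (-1 * a + 2))
  have e9 := abs_of_nonpos (by omega : -t - (1 * a + -1) ≤ 0)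
  have e10 := abs_of_nonpos (by omega : -r - (0 * a + 1) ≤ 0)
  have e11 := abs_of_nonpos (by omega : -s - (0 * a + 1) ≤ 0)
  have e12 := abs_of_nonneg (by omega : 0 ≤ -t - (-2 * a + 1))
  have e13 := abs_of_nonneg (by omega : 0 ≤ -r - (-1 * a + -1))
  have e14 := abs_of_nonneg (by omega : 0 ≤ -s - (-1 * a + -1))
  have e15 := abs_of_nonpos (by omega : -t - (1 * a + -2) ≤ 0)
  have e16 := abs_of_nonneg (by omega : 0 ≤ u - (-1 * a + 1))
  have e17 := abs_of_nonneg (by omega : 0 ≤ -s - (-2 * a + 1))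
  have e18 := abs_of_nonneg (by omega : 0 ≤ -t - (-2 * a + 0))
  have e19 := abs_of_nonneg (by omega : 0 ≤ -r - (-2 * a + 1))
  have e20 := abs_of_nonpos (by omega : u - (2 * a + 0) ≤ 0)
  have e21 := abs_of_nonpos (by omega : u - (2 * a + 1) ≤ 0)
  have e22 := abs_of_nonneg (by omega : 0 ≤ -t - (-2 * a + -1))
  simp only [e0, e1, e2, e3, e4, e5, e6, e7, e8, e9, e10, e11, e12, e13, e14, e15, e16, e17, e18, e19, e20, e21, e22] at h0 h1 h2 h3 h4 h5 h6 h7 h8 h9 h10 h11 h12 h13 h14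
  clear e0 e1 e2 e3 e4 e5 e6 e7 e8 e9 e10 e11 e12 e13 e14 e15 e16 e17 e18 e19 e20 e21 e22
  rcases R with ⟨h, hA, hB⟩ | ⟨h, hA, hB⟩ | ⟨h, hA, hB⟩ <;>
  rcases S with ⟨h', hC, hD⟩ | ⟨h', hC, hD⟩ | ⟨h', hC, hD⟩ <;>
  rw [hA, hC] at h0 <;> rw [hB, hD] at h4 h5 <;> clear hA hB hC hD <;>
  rcases T with ⟨h'', hE, hF, hG⟩ | ⟨h'', h2'', hE, hF, hG⟩ | ⟨h'', hE, hF, hG⟩ <;>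
  rcases U with ⟨hu1, hH, hI, hJ, hK⟩ | ⟨hu1, hu2, hH, hI, hJ⟩ | ⟨hu1, hH, hI, hJ, hK⟩ <;>
  omega

/-- Orthant of `v₈ = v₁ - v₂ - v₃`, `k ≡ 1 (mod 2)`: for odd `k ≥ 5`, `a = (k+1)/2`,
every point `x = (-r, -s, -t, u)` with `0 ≤ r, s, t, u ≤ a + 1` is within
`l¹`-distance `k` of the lattice `L`. -/
theorem lattice_orthant_v₈_odd (k a : ℤ) (hk : 5 ≤ k) (hko : Odd k) (ha : a = (k + 1) / 2)
    (v₁ v₂ v₃ v₄ : Fin 4 → ℤ)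
    (hv₁ : v₁ = ![-a + 1, a + 1, -a + 1, a])
    (hv₂ : v₂ = ![a + 1, a + 1, -a + 2, a - 1])
    (hv₃ : v₃ = ![-a - 1, a - 1, a - 1, -a])
    (hv₄ : v₄ = ![-a, a, a, a - 1])
    (v₈ : Fin 4 → ℤ) (hv₈ : v₈ = v₁ - v₂ - v₃)
    (hv₈' : v₈ = ![-a + 1, -a + 1, -a, a + 1])
    (L : Submodule ℤ (Fin 4 → ℤ))
    (hL : L = Submodule.span ℤ {v₁, v₂, v₃, v₄}) :
    ∀ r s t u : ℤ, 0 ≤ r → r ≤ a + 1 → 0 ≤ s → s ≤ a + 1 →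
      0 ≤ t → t ≤ a + 1 → 0 ≤ u → u ≤ a + 1 →
      ∀ x : Fin 4 → ℤ, x = ![-r, -s, -t, u] →
      ∃ w ∈ L, |x 0 - w 0| + |x 1 - w 1| + |x 2 - w 2| + |x 3 - w 3| ≤ k := by
  intro r s t u hr hr' hs hs' ht ht' hu hu' x hx
  have hka : k = 2 * a - 1 := by
    obtain ⟨m, hm⟩ := hko
    omega
  by_contra hcon
  push Not at hcon
  have key : ∀ c₁ c₂ c₃ c₄ : ℤ, k <
      |-r - (c₁ * (-a + 1) + c₂ * (a + 1) + c₃ * (-a - 1) + c₄ * (-a))| +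
      |-s - (c₁ * (a + 1) + c₂ * (a + 1) + c₃ * (a - 1) + c₄ * a)| +
      |-t - (c₁ * (-a + 1) + c₂ * (-a + 2) + c₃ * (a - 1) + c₄ * a)| +
      |u - (c₁ * a + c₂ * (a - 1) + c₃ * (-a) + c₄ * (a - 1))| := by
    intro c₁ c₂ c₃ c₄
    have hmem : c₁ • v₁ + c₂ • v₂ + c₃ • v₃ + c₄ • v₄ ∈ L := by
      rw [hL]
      refine add_mem (add_mem (add_mem ?_ ?_) ?_) ?_ <;>
      exact Submodule.smul_mem _ _ (Submodule.subset_span (by simp))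
    have h := hcon _ hmem
    simpa [hx, hv₁, hv₂, hv₃, hv₄] using h
  have key2 : ∀ c₁ c₂ c₃ c₄ p q m n : ℤ,
      p = c₁ * (-a + 1) + c₂ * (a + 1) + c₃ * (-a - 1) + c₄ * (-a) →
      q = c₁ * (a + 1) + c₂ * (a + 1) + c₃ * (a - 1) + c₄ * a →
      m = c₁ * (-a + 1) + c₂ * (-a + 2) + c₃ * (a - 1) + c₄ * a →
      n = c₁ * a + c₂ * (a - 1) + c₃ * (-a) + c₄ * (a - 1) →
      2 * a - 1 < |-r - p| + |-s - q| + |-t - m| + |u - n| := by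
    intro c₁ c₂ c₃ c₄ p q m n hp hq hm hn
    rw [hp, hq, hm, hn, ← hka]
    exact key c₁ c₂ c₃ c₄
  apply box_core a r s t u (by omega) hr hr' hs hs' ht ht' hu hu'
  · exact key2 1 (-1) (-1) 0 _ _ _ _ (by ring) (by ring) (by ring) (by ring)
  · exact key2 0 0 0 0 _ _ _ _ (by ring) (by ring) (by ring) (by ring)
  · exact key2 0 (-1) (-1) 0 _ _ _ _ (by ring) (by ring) (by ring) (by ring)
  · exact key2 1 (-1) 0 0 _ _ _ _ (by ring) (by ring) (by ring) (by ring)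
  · exact key2 1 (-1) 0 (-1) _ _ _ _ (by ring) (by ring) (by ring) (by ring)
  · exact key2 0 (-1) (-1) 1 _ _ _ _ (by ring) (by ring) (by ring) (by ring)
  · exact key2 1 0 0 (-1) _ _ _ _ (by ring) (by ring) (by ring) (by ring)
  · exact key2 0 (-1) 0 0 _ _ _ _ (by ring) (by ring) (by ring) (by ring)
  · exact key2 1 (-2) (-1) 0 _ _ _ _ (by ring) (by ring) (by ring) (by ring)
  · exact key2 1 (-1) (-1) (-1) _ _ _ _ (by ring) (by ring) (by ring) (by ring)
  · exact key2 2 (-1) 0 (-1) _ _ _ _ (by ring) (by ring) (by ring) (by ring)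
  · exact key2 0 (-1) (-2) 1 _ _ _ _ (by ring) (by ring) (by ring) (by ring)
  · exact key2 1 (-1) (-1) 1 _ _ _ _ (by ring) (by ring) (by ring) (by ring)
  · exact key2 1 (-2) (-2) 1 _ _ _ _ (by ring) (by ring) (by ring) (by ring)
  · exact key2 2 (-2) (-1) (-1) _ _ _ _ (by ring) (by ring) (by ring) (by ring)
end
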